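/- arXiv:1003.0602 — 2 statements merged into one kernel-verified Lean document; each statement's English description precedes it below -/
import Mathlib

section
/- Let F be an algebraically closed field of characteristic 0, V a finite-dimensional F-vector space, B a nondegenerate bilinear form on V with B(v,w) = ε·B(w,v) for all v, w (ε = ±1), and g the Lie algebra of B-skew-adjoint endomorphisms of V. Let e ∈ g be nilpotent and reachable, i.e., e ∈ [g_e, g_e], and let (e, h, f) be an sl2-triple in g. Then for every integer λ ≥ 0, [g(1)_e, g(λ)_e] = g(λ+1)_e. -/
/-!
Write `W_m` for the space of lowest weight vectors of weight `-m` (`lowest h f m`). Elementary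
`sl2`-theory gives that `V` is spanned by the vectors `e ^ i w` with `w ∈ W_m`, and that the form
`(u, w) ↦ B u (e ^ m w)` is nondegenerate on `W_m`, while distinct `W_m` generate orthogonal
subspaces.

**The centraliser.** For `u ∈ W_m`, `v ∈ W_n` and `N ≥ m, n` the operator
`T_N(u, v) : x ↦ ∑ i ≤ N, B u (e ^ i x) • e ^ (N - i) v` commutes with `e`, has `ad h`-weight
`2N - m - n`, and its `B`-adjoint is `ε (-1) ^ N T_N(v, u)`. These operators compose by the rule
`T_N(u, v) T_M(u', v') = B u (e ^ m v') T_{N+M-m}(u', v)` (`tens_mul`). The identity of `V` is the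
sum of the `T_m(u_i, w_i)` over dual bases of all the `W_m` (`exists_unity`), so the `T`'s span the
centraliser of `e` in `End V`, and `g(L)_e` is spanned by the operators
`P_N(u, v) = T_N(u, v) - ε (-1) ^ N T_N(v, u)` with `2N = m + n + L` (`mem_span_skewTens`).

**Reachability.** Suppose `W_k = 0`. The linear functional
`τ x = ∑ m > k, ∑ i, B u_i (e ^ (m - 1) (x w_i))`, a partial trace of the coefficient of `e`,
kills every commutator of elements of the centraliser, by the composition rule. But
`τ e = ∑ m > k, dim W_m`, so a reachable `e` has `W_p = 0` for all `p > k`. In other words the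
sizes of the Jordan blocks of a reachable `e` have no gaps and reach down to `1`
(`lowest_ne_zero`).

**Generation.** It remains to write `P_N(u, v)` of weight `l + 1` as a combination of brackets of
weights `1` and `l` (`skewTens_mem`). If `m + 1 < n`, pick `a, b ∈ W_{n-1}` with
`B a (e ^ (n - 1) b) ≠ 0`; then `⁅P_n(a, v), P_{N-1}(u, b)⁆` is a nonzero multiple of
`P_N(u, v)`. If `n = m + 1`, the sign `ε (-1) ^ N` decides which one of
`P_{N-1}(u, u) = 2 T_{N-1}(u, u)` and `P_N(v, v) = 2 T_N(v, v)` holds, the other operator being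
zero, and this one serves as the second factor. If `m = n`, the first recipe, through `W_{m-1}`,
produces `P_N(u, v)` up to a multiple of some `P_{N-1}(a, b)` with `a, b ∈ W_{m-1}`, and one
concludes by induction on `m`.
-/

open Module
set_option linter.unusedSectionVars false

section
variable {F V : Type*} [Field F] [CharZero F] [AddCommGroup V] [Module F V] [FiniteDimensional F V]

/-! ### Lowest weight vectors of an `sl2`-triple -/

/-- The relations of an `sl2`-triple `(e, h, f)` acting on `V`, written on vectors, together with
the nilpotency of `e`. -/
structure Sl2Rel (e h f : End F V) : Prop where
  nil : IsNilpotent e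
  he : ∀ v, h (e v) = e (h v) + (2 : F) • e v
  hf : ∀ v, h (f v) = f (h v) - (2 : F) • f v
  ef : ∀ v, e (f v) = f (e v) + h v

/-- The space `W_m` of lowest weight vectors of weight `-m`: those killed by `f` on which `h` acts
by `-m`. Its dimension is the number of Jordan blocks of `e` of size `m + 1`. -/
def lowest (h f : End F V) (m : ℕ) : Submodule F V where
  carrier := {w | f w = 0 ∧ h w = -(m : F) • w}
  add_mem' := by
    rintro a b ⟨h1, h2⟩ ⟨h3, h4⟩
    exact ⟨by simp [h1, h3], by rw [map_add, h2, h4, smul_add]⟩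
  zero_mem' := by simp
  smul_mem' := by
    rintro c a ⟨h1, h2⟩
    exact ⟨by simp [h1], by rw [map_smul, h2, smul_comm]⟩

namespace Sl2Rel
variable {e h f : End F V}

lemma h_pow (s : Sl2Rel e h f) (k : ℕ) (v : V) :
    h ((e ^ k) v) = (e ^ k) (h v) + (2 * k : F) • (e ^ k) v := by
  induction k generalizing v with
  | zero => simp
  | succ k ih =>
    rw [pow_succ, Module.End.mul_apply, ih, s.he, map_add, map_smul, Module.End.mul_apply]
    push_cast
    module

lemma f_pow (s : Sl2Rel e h f) (k : ℕ) (v : V) :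
    f ((e ^ (k + 1)) v) =
      (e ^ (k + 1)) (f v) - (k + 1 : F) • (e ^ k) (h v + (k : F) • v) := by
  induction k generalizing v with
  | zero => simp [s.ef]
  | succ k ih =>
    rw [pow_succ, Module.End.mul_apply, ih, s.he, Module.End.mul_apply, s.ef, pow_succ e k]
    simp only [map_add, map_smul, Module.End.mul_apply]
    push_cast
    module

/-- A nonzero weight vector killed by `e f` and by `e ^ k` has weight `-i` for some `i < k`. -/
lemma eq_zero_of_weight (s : Sl2Rel e h f) {v : V} {c : F} (hv : e (f v) = 0) (hc : h v = c • v)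
    (k : ℕ) (hk : (e ^ k) v = 0) (hck : ∀ i < k, c ≠ -(i : F)) : v = 0 := by
  induction k with
  | zero => simpa using hk
  | succ k ih =>
    refine ih ?_ (fun i hi => hck i (by omega))
    have h1 := s.f_pow k v
    rw [hk, map_zero, pow_succ, Module.End.mul_apply, hv, map_zero, hc, ← add_smul, map_smul,
      smul_smul, zero_sub, eq_comm, neg_eq_zero, smul_eq_zero] at h1
    rcases h1 with h1 | h1
    · exfalso
      rcases mul_eq_zero.1 h1 with h2 | h2
      · exact Nat.cast_add_one_ne_zero k h2
      · exact hck k (by omega) (eq_neg_of_add_eq_zero_left h2)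
    · exact h1

/-- The powers of `f` are eigenvectors of `ad h` with distinct eigenvalues, so only finitely many of
them are nonzero. -/
lemma nil_f (s : Sl2Rel e h f) : IsNilpotent f := by
  by_contra hn
  have hne : ∀ k : ℕ, f ^ k ≠ 0 := fun k hk => hn ⟨k, hk⟩
  have hpow : ∀ k : ℕ, ∀ v, h ((f ^ k) v) = (f ^ k) (h v) - (2 * k : F) • (f ^ k) v := by
    intro k
    induction k with
    | zero => simp
    | succ k ih =>
      intro v
      rw [pow_succ, Module.End.mul_apply, ih, s.hf, map_sub, map_smul, Module.End.mul_apply]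
      push_cast
      module
  let A : End F (End F V) := LinearMap.mulLeft F h - LinearMap.mulRight F h
  have hA : ∀ k : ℕ, A.HasEigenvector (-(2 * k : F)) (f ^ k) := by
    intro k
    refine ⟨?_, hne k⟩
    rw [Module.End.mem_eigenspace_iff]
    ext v
    simp [A, hpow]
  have hli := Module.End.eigenvectors_linearIndependent' A (fun k : ℕ => -(2 * k : F))
    (by intro a b hab; simpa using hab) _ hA
  exact Module.Finite.not_linearIndependent_of_infinite _ hli

/-- The triple `(f, -h, e)`, which exchanges the roles of `e` and `f`. -/
lemma swap (s : Sl2Rel e h f) : Sl2Rel f (-h) e where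
  nil := s.nil_f
  he v := by simp [s.hf]; module
  hf v := by simp [s.he]; module
  ef v := by simp [s.ef]

/-- On `ker (e f)` the operator `f ^ k e ^ k` is a nonzero multiple of the product of the commuting
operators `h + i`, `i < k`. Its kernel there is therefore a sum of eigenspaces of `h`. -/
lemma mem_span (s : Sl2Rel e h f) (k : ℕ) (v : V) (hv : e (f v) = 0) (hk : (f ^ k) ((e ^ k) v) = 0) :
    v ∈ Submodule.span F {w : V | ∃ i < k, e (f w) = 0 ∧ h w = -(i : F) • w} := by
  induction k generalizing v with
  | zero =>
    have : v = 0 := by simpa using hk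
    simp [this]
  | succ k ih =>
    have h1 : (f ^ k) ((e ^ k) (h v + (k : F) • v)) = 0 := by
      rw [pow_succ f, Module.End.mul_apply, s.f_pow, pow_succ, Module.End.mul_apply, hv, map_zero,
        zero_sub, map_neg, map_smul, neg_eq_zero, smul_eq_zero] at hk
      exact hk.resolve_left (Nat.cast_add_one_ne_zero k)
    have h2 : e (f (h v + (k : F) • v)) = 0 := by
      have e1 : f (h v) = h (f v) + (2 : F) • f v := by rw [s.hf]; module
      have e2 := s.he (f v)
      rw [hv, map_zero] at e2
      rw [map_add, map_add, e1, map_add, map_smul, map_smul, map_smul, hv, smul_zero, add_zero,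
        smul_zero, add_zero]
      rw [smul_zero, add_zero] at e2
      exact e2.symm
    have h3 := ih _ h2 h1
    -- `h + k` is invertible on the span of the weights `-i` with `i < k`.
    have key : ∀ x ∈ Submodule.span F {w : V | ∃ i < k, e (f w) = 0 ∧ h w = -(i : F) • w},
        ∃ y ∈ Submodule.span F {w : V | ∃ i < k, e (f w) = 0 ∧ h w = -(i : F) • w},
          h y + (k : F) • y = x ∧ e (f y) = 0 := by
      intro x hx
      induction hx using Submodule.span_induction with
      | mem w hw =>
        obtain ⟨i, hi, hw1, hw2⟩ := hw
        have hne : (k - i : F) ≠ 0 := by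
          rw [sub_ne_zero]; exact_mod_cast (by omega)
        refine ⟨((k - i : F))⁻¹ • w, Submodule.smul_mem _ _ (Submodule.subset_span ⟨i, hi, hw1, hw2⟩),
          ?_, by simp [hw1]⟩
        rw [map_smul, hw2, smul_smul, smul_smul, ← add_smul]
        rw [show (k - i : F)⁻¹ * -(i : F) + k * (k - i : F)⁻¹ = (k - i : F) * (k - i : F)⁻¹ by ring,
          mul_inv_cancel₀ hne, one_smul]
      | zero => exact ⟨0, Submodule.zero_mem _, by simp⟩
      | add a b _ _ ha hb =>
        obtain ⟨a', ha1, ha2, ha3⟩ := ha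
        obtain ⟨b', hb1, hb2, hb3⟩ := hb
        refine ⟨a' + b', Submodule.add_mem _ ha1 hb1, ?_, by simp [ha3, hb3]⟩
        rw [← ha2, ← hb2, map_add]; module
      | smul c a _ ha =>
        obtain ⟨a', ha1, ha2, ha3⟩ := ha
        refine ⟨c • a', Submodule.smul_mem _ _ ha1, ?_, by simp [ha3]⟩
        rw [← ha2, map_smul]; module
    obtain ⟨y, hy1, hy2, hy3⟩ := key _ h3
    rw [← sub_add_cancel v y]
    refine Submodule.add_mem _ (Submodule.subset_span ⟨k, by omega, by simp [hv, hy3], ?_⟩)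
      (Submodule.span_mono ?_ hy1)
    · rw [map_sub, eq_sub_of_add_eq hy2]; module
    · rintro w ⟨i, hi, hw⟩
      exact ⟨i, by omega, hw⟩

/-- `ker e` and the image of `f` intersect trivially: an eigenvector `v` of weight `-i` would give
`f v` the weight `-i - 2`, which is not allowed for a vector killed by `e`. -/
lemma f_eq_zero (s : Sl2Rel e h f) {v : V} (hv : e (f v) = 0) : f v = 0 := by
  obtain ⟨K, hK⟩ := s.nil
  have h1 := s.mem_span K v hv (by simp [hK])
  clear hv
  induction h1 using Submodule.span_induction with
  | mem w hw =>
    obtain ⟨i, -, hw1, hw2⟩ := hw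
    obtain ⟨M, hM⟩ := s.nil_f
    refine s.swap.eq_zero_of_weight (v := f w) (c := (i + 2 : F)) (by simp [hw1]) ?_ M
      (by simp [hM]) ?_
    · rw [LinearMap.neg_apply, s.hf, hw2, map_smul]; module
    · intro j _ hj
      have : ((i + 2 + j : ℕ) : F) = 0 := by push_cast; rw [hj]; ring
      rw [Nat.cast_eq_zero] at this
      omega
  | zero => simp
  | add a b _ _ ha hb => simp [ha, hb]
  | smul c a _ ha => simp [ha]

lemma ker_le (s : Sl2Rel e h f) {v : V} (hv : f v = 0) :
    v ∈ Submodule.span F {w : V | ∃ m, w ∈ lowest h f m} := by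
  obtain ⟨K, hK⟩ := s.nil
  refine Submodule.span_mono ?_ (s.mem_span K v (by simp [hv]) (by simp [hK]))
  rintro w ⟨i, -, hw1, hw2⟩
  exact ⟨i, s.f_eq_zero hw1, hw2⟩

/-- The sum is direct, because `ker f` meets the image of `e` trivially; equality with `V` is a
dimension count, using that also `ker e` meets the image of `f` trivially. -/
lemma sup_eq_top (s : Sl2Rel e h f) : LinearMap.ker f ⊔ LinearMap.range e = ⊤ := by
  have key : ∀ {e h f : End F V}, Sl2Rel e h f →
      Disjoint (LinearMap.range f) (LinearMap.ker e) := by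
    intro e h f s
    rw [Submodule.disjoint_def]
    rintro _ ⟨x, rfl⟩ hx
    exact s.f_eq_zero hx
  have h1 := Submodule.finrank_add_finrank_le_of_disjoint (key s)
  have h2 := e.finrank_range_add_finrank_ker
  refine Submodule.eq_top_of_disjoint _ _ ?_ (key s.swap).symm
  have h3 := f.finrank_range_add_finrank_ker
  omega

/-- Iterating `V = ker f + e V` a total of `k` times. -/
lemma exists_decomp (s : Sl2Rel e h f) (k : ℕ) (v : V) :
    ∃ x ∈ Submodule.span F {z : V | ∃ m i, ∃ w ∈ lowest h f m, z = (e ^ i) w},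
      ∃ y, v = x + (e ^ k) y := by
  induction k with
  | zero => exact ⟨0, Submodule.zero_mem _, v, by simp⟩
  | succ k ih =>
    obtain ⟨x, hx, y, rfl⟩ := ih
    have hy : y ∈ LinearMap.ker f ⊔ LinearMap.range e := by rw [s.sup_eq_top]; trivial
    obtain ⟨w, hw, _, ⟨z, rfl⟩, rfl⟩ := Submodule.mem_sup.1 hy
    refine ⟨x + (e ^ k) w, Submodule.add_mem _ hx ?_, z, ?_⟩
    · have hw' := Submodule.mem_map_of_mem (f := e ^ k) (s.ker_le hw)
      rw [Submodule.map_span] at hw'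
      refine Submodule.span_mono ?_ hw'
      rintro _ ⟨w, ⟨m, hw⟩, rfl⟩
      exact ⟨m, k, w, hw, rfl⟩
    · rw [pow_succ, Module.End.mul_apply, map_add, add_assoc]

lemma span_pow_lowest (s : Sl2Rel e h f) :
    Submodule.span F {z : V | ∃ m i, ∃ w ∈ lowest h f m, z = (e ^ i) w} = ⊤ := by
  rw [eq_top_iff]
  intro v _
  obtain ⟨K, hK⟩ := s.nil
  obtain ⟨x, hx, y, rfl⟩ := s.exists_decomp K v
  simpa [hK] using hx

lemma pow_lowest (s : Sl2Rel e h f) {m : ℕ} {w : V} (hw : w ∈ lowest h f m) {i : ℕ}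
    (hi : m < i) : (e ^ i) w = 0 := by
  suffices h0 : (e ^ (m + 1)) w = 0 by
    obtain ⟨j, rfl⟩ := Nat.exists_eq_add_of_lt hi
    rw [show m + j + 1 = j + (m + 1) by ring, pow_add, Module.End.mul_apply, h0, map_zero]
  obtain ⟨M, hM⟩ := s.nil
  have h1 : f ((e ^ (m + 1)) w) = 0 := by
    rw [s.f_pow, hw.1, hw.2]; simp
  refine s.eq_zero_of_weight (c := (m + 2 : F)) (by simp [h1]) ?_ M (by simp [hM]) ?_
  · rw [s.h_pow, hw.2, map_smul]; push_cast; module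
  · intro j _ hj
    have : ((m + 2 + j : ℕ) : F) = 0 := by push_cast; rw [hj]; ring
    rw [Nat.cast_eq_zero] at this
    omega

lemma lowest_eq_zero (s : Sl2Rel e h f) {m k : ℕ} {w : V} (hw : w ∈ lowest h f m)
    (hk : e ^ k = 0) (hm : k ≤ m) : w = 0 := by
  refine s.eq_zero_of_weight (by simp [hw.1]) hw.2 k (by simp [hk]) ?_
  intro i hi hc
  rw [neg_inj, Nat.cast_inj] at hc
  omega
end Sl2Rel

/-! ### The form on lowest weight vectors -/

/-- An `sl2`-triple acting on `V` with a nondegenerate `ε`-symmetric form, `ε ^ 2 = 1`, for which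
`e` and `h` are skew-adjoint. -/
structure FormSl2 (B : LinearMap.BilinForm F V) (ε : F) (e h f : End F V) : Prop
    extends Sl2Rel e h f where
  nondeg : B.Nondegenerate
  eps : ε * ε = 1
  sym : ∀ v w, B v w = ε * B w v
  skew_e : ∀ v w, B (e v) w = - B v (e w)
  skew_h : ∀ v w, B (h v) w = - B v (h w)

/-- The operator `T_N(u, v) : x ↦ ∑ i ≤ N, B u (e ^ i x) • e ^ (N - i) v`. It is meaningful for
`u ∈ W_m`, `v ∈ W_n` and `N ≥ m, n`, when it commutes with `e`. -/
def tens (B : LinearMap.BilinForm F V) (e : End F V) (N : ℕ) (u v : V) : End F V :=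
  ∑ i ∈ Finset.range (N + 1), ((B u).comp (e ^ i)).smulRight ((e ^ (N - i)) v)

/-- The operator `P_N(u, v) = T_N(u, v) - ε (-1) ^ N T_N(v, u)`, which is `T_N(u, v)` minus its
`B`-adjoint. -/
def skewTens (B : LinearMap.BilinForm F V) (ε : F) (e : End F V) (N : ℕ) (u v : V) : End F V :=
  tens B e N u v - (ε * (-1) ^ N) • tens B e N v u

lemma tens_apply (B : LinearMap.BilinForm F V) (e : End F V) (N : ℕ) (u v x : V) :
    tens B e N u v x = ∑ i ∈ Finset.range (N + 1), B u ((e ^ i) x) • (e ^ (N - i)) v := by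
  simp [tens, LinearMap.sum_apply]

namespace FormSl2
variable {B : LinearMap.BilinForm F V} {ε : F} {e h f : End F V}

lemma skew_pow (s : FormSl2 B ε e h f) (k : ℕ) (v w : V) :
    B ((e ^ k) v) w = (-1) ^ k * B v ((e ^ k) w) := by
  induction k generalizing v w with
  | zero => simp
  | succ k ih =>
    rw [pow_succ, Module.End.mul_apply, ih, s.skew_e, ← Module.End.mul_apply, ← pow_succ',
      ← pow_succ, pow_succ (-1 : F)]
    ring

lemma pow_right_eq_zero (s : FormSl2 B ε e h f) {m : ℕ} {u : V} (hu : u ∈ lowest h f m) {i : ℕ}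
    (hi : m < i) (x : V) : B u ((e ^ i) x) = 0 := by
  have h1 := s.skew_pow i u x
  rw [s.pow_lowest hu hi] at h1
  simpa using h1.symm

/-- Weight spaces of `h` pair trivially unless their weights are opposite. -/
lemma weight (s : FormSl2 B ε e h f) {m : ℕ} {u x : V} (hu : u ∈ lowest h f m) {c : F}
    (hx : h x = c • x) (hne : B u x ≠ 0) : c = m := by
  have h1 := s.skew_h u x
  rw [hu.2, hx, map_smul, map_smul, LinearMap.smul_apply, smul_eq_mul, smul_eq_mul] at h1
  have h2 : (c - m) * B u x = 0 := by linear_combination h1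
  exact sub_eq_zero.1 ((mul_eq_zero.1 h2).resolve_right hne)

/-- The pairing between `u ∈ W_m` and `e ^ i v`, `v ∈ W_n`, vanishes unless `n = i = m`. -/
lemma orth (s : FormSl2 B ε e h f) {m n i : ℕ} {u v : V} (hu : u ∈ lowest h f m)
    (hv : v ∈ lowest h f n) (hne : B u ((e ^ i) v) ≠ 0) : n = m ∧ i = m := by
  have h1 : i ≤ m := by
    by_contra! hi
    exact hne (s.pow_right_eq_zero hu hi v)
  have h2 : i ≤ n := by
    by_contra! hi
    exact hne (by rw [s.pow_lowest hv hi, map_zero])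
  have h3 := s.weight hu (x := (e ^ i) v) (c := (2 * i - n : F))
    (by rw [s.h_pow, hv.2, map_smul]; module) hne
  have h4 : ((2 * i : ℕ) : F) = ((m + n : ℕ) : F) := by push_cast; linear_combination h3
  rw [Nat.cast_inj] at h4
  omega

lemma pair_comm (s : FormSl2 B ε e h f) {m n : ℕ} {u v : V} (hu : u ∈ lowest h f m)
    (hv : v ∈ lowest h f n) :
    B v ((e ^ n) u) = (ε * (-1) ^ m) * B u ((e ^ m) v) := by
  by_cases hmn : m = n
  · subst hmn
    rw [s.sym v, s.skew_pow]; ring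
  · have h1 : B v ((e ^ n) u) = 0 := by
      by_contra hne; exact hmn (s.orth hv hu hne).1
    have h2 : B u ((e ^ m) v) = 0 := by
      by_contra hne; exact hmn (s.orth hu hv hne).1.symm
    rw [h1, h2, mul_zero]

/-- The form `(u, w) ↦ B u (e ^ m w)` on `W_m` is nondegenerate. -/
lemma eq_zero_of_pair (s : FormSl2 B ε e h f) {m : ℕ} {u : V} (hu : u ∈ lowest h f m)
    (h0 : ∀ w ∈ lowest h f m, B u ((e ^ m) w) = 0) : u = 0 := by
  apply s.nondeg.1
  intro x
  have hx : x ∈ Submodule.span F {z : V | ∃ m i, ∃ w ∈ lowest h f m, z = (e ^ i) w} := by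
    rw [s.span_pow_lowest]; trivial
  induction hx using Submodule.span_induction with
  | mem z hz =>
    obtain ⟨n, i, w, hw, rfl⟩ := hz
    by_contra hne
    obtain ⟨rfl, rfl⟩ := s.orth hu hw hne
    exact hne (h0 w hw)
  | zero => simp
  | add a b _ _ ha hb => simp [ha, hb]
  | smul c a _ ha => simp [ha]

/-- Dual bases of `W_m` for the form `(u, w) ↦ B u (e ^ m w)`. -/
lemma exists_dual (s : FormSl2 B ε e h f) (m : ℕ) :
    ∃ u w : Fin (finrank F (lowest h f m)) → V, (∀ i, u i ∈ lowest h f m) ∧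
      (∀ i, w i ∈ lowest h f m) ∧ (∀ i, B (u i) ((e ^ m) (w i)) = 1) ∧
      ∀ x ∈ lowest h f m, ∑ i, B (u i) ((e ^ m) x) • w i = x := by
  let C : LinearMap.BilinForm F (lowest h f m) :=
    (B.compl₂ (e ^ m)).domRestrict₁₂ (lowest h f m) (lowest h f m)
  have hC : ∀ x y, C x y = B x ((e ^ m) y) := fun x y => rfl
  have hCn : C.Nondegenerate := by
    refine ⟨?_, ?_⟩
    · intro x hx
      exact Subtype.ext (s.eq_zero_of_pair x.2 fun w hw => hx ⟨w, hw⟩)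
    · intro y hy
      refine Subtype.ext (s.eq_zero_of_pair y.2 fun w hw => ?_)
      have := hy ⟨w, hw⟩
      rw [hC] at this
      rw [s.pair_comm hw y.2, this, mul_zero]
  let b := Module.finBasis F (lowest h f m)
  let d := C.dualBasis hCn b
  have hd : ∀ i j, C (d i) (b j) = if j = i then 1 else 0 := fun i j =>
    LinearMap.BilinForm.apply_dualBasis_left hCn b i j
  refine ⟨fun i => d i, fun i => b i, fun i => (d i).2, fun i => (b i).2, fun i => ?_, ?_⟩
  · simpa [hC] using hd i i
  · intro x hx
    have h1 : ∀ i, B (d i) ((e ^ m) x) = b.repr ⟨x, hx⟩ i := by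
      intro i
      have : C (d i) ⟨x, hx⟩ = b.repr ⟨x, hx⟩ i := by
        have h0 := congrArg (C (d i)) (b.sum_repr ⟨x, hx⟩)
        rw [← h0]
        simp only [map_sum, map_smul, hd, smul_eq_mul, mul_ite, mul_one, mul_zero,
          Finset.sum_ite_eq', Finset.mem_univ, if_true]
      exact this
    have h2 : ((∑ i, b.repr ⟨x, hx⟩ i • b i : lowest h f m) : V) = x :=
      congrArg Subtype.val (b.sum_repr ⟨x, hx⟩)
    rw [AddSubmonoidClass.coe_finsetSum] at h2
    simp only [h1]
    exact h2

/-! ### The operators `T_N(u, v)` and the centraliser of `e` -/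

lemma tens_lowest (s : FormSl2 B ε e h f) {m n N : ℕ} {u x v : V} (hu : u ∈ lowest h f m)
    (hx : x ∈ lowest h f n) (hN : m ≤ N) :
    tens B e N u v x = B u ((e ^ m) x) • (e ^ (N - m)) v := by
  rw [tens_apply, Finset.sum_eq_single m]
  · intro i _ hi
    have : B u ((e ^ i) x) = 0 := by
      by_contra hne
      exact hi (s.orth hu hx hne).2
    rw [this, zero_smul]
  · intro hm
    exact absurd (Finset.mem_range.2 (by omega)) hm

lemma tens_comm (s : FormSl2 B ε e h f) {m N : ℕ} {u v : V} (hu : u ∈ lowest h f m)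
    (hm : m ≤ N) (hv : (e ^ (N + 1)) v = 0) (x : V) :
    tens B e N u v (e x) = e (tens B e N u v x) := by
  have h1 := Finset.sum_range_succ (fun i => B u ((e ^ i) x) • (e ^ (N + 1 - i)) v) (N + 1)
  rw [Finset.sum_range_succ'] at h1
  simp only [s.pow_right_eq_zero hu (Nat.lt_succ_of_le hm), zero_smul, add_zero, Nat.sub_zero, hv,
    smul_zero] at h1
  rw [tens_apply, tens_apply, map_sum]
  refine Eq.trans (Finset.sum_congr rfl fun i hi => ?_)
    (h1.trans (Finset.sum_congr rfl fun i hi => ?_))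
  · rw [← Module.End.mul_apply, ← pow_succ, Nat.add_sub_add_right]
  · rw [map_smul, ← Module.End.mul_apply, ← pow_succ', Nat.succ_sub]
    have := Finset.mem_range.1 hi
    omega

lemma tens_comm_pow (s : FormSl2 B ε e h f) {m N : ℕ} {u v : V} (hu : u ∈ lowest h f m)
    (hm : m ≤ N) (hv : (e ^ (N + 1)) v = 0) (k : ℕ) (x : V) :
    tens B e N u v ((e ^ k) x) = (e ^ k) (tens B e N u v x) := by
  induction k generalizing x with
  | zero => simp
  | succ k ih => rw [pow_succ, Module.End.mul_apply, ih, s.tens_comm hu hm hv, Module.End.mul_apply]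

lemma tens_shift (s : FormSl2 B ε e h f) {m N : ℕ} {u v : V} (hu : u ∈ lowest h f m)
    (hm : m ≤ N) (k : ℕ) : tens B e N u ((e ^ k) v) = tens B e (N + k) u v := by
  ext x
  rw [tens_apply, tens_apply]
  rw [← Finset.sum_subset (s₁ := Finset.range (N + 1)) (s₂ := Finset.range (N + k + 1))]
  · refine Finset.sum_congr rfl fun i hi => ?_
    have := Finset.mem_range.1 hi
    rw [← Module.End.mul_apply, ← pow_add, show N - i + k = N + k - i by omega]
  · exact Finset.range_subset_range.2 (by omega)
  · intro i _ hi
    rw [Finset.mem_range] at hi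
    rw [s.pow_right_eq_zero hu (by omega), zero_smul]

/-- The composition rule of the operators `T_N(u, v)`: the left factor commutes with `e`,
so it only has to be evaluated at the lowest weight vector `v'`. -/
lemma tens_mul (s : FormSl2 B ε e h f) {m n m' n' N M : ℕ} {u v u' v' : V}
    (hu : u ∈ lowest h f m) (hv : v ∈ lowest h f n) (hu' : u' ∈ lowest h f m')
    (hv' : v' ∈ lowest h f n') (hm : m ≤ N) (hn : n ≤ N) (hm' : m' ≤ M) :
    tens B e N u v * tens B e M u' v' = B u ((e ^ m) v') • tens B e (N + M - m) u' v := by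
  ext x
  rw [show N + M - m = M + (N - m) by omega, ← s.tens_shift hu' hm', Module.End.mul_apply,
    tens_apply B e M, map_sum, LinearMap.smul_apply, tens_apply, Finset.smul_sum]
  refine Finset.sum_congr rfl fun i _ => ?_
  rw [map_smul, s.tens_comm_pow hu hm (s.pow_lowest hv (by omega)), s.tens_lowest hu hv' hm,
    map_smul, smul_comm]

/-- `T_N(u, v)` has `ad h`-weight `2N - m - n`. -/
lemma tens_weight (s : FormSl2 B ε e h f) {m n N : ℕ} {u v : V}
    (hu : u ∈ lowest h f m) (hv : v ∈ lowest h f n) (x : V) :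
    h (tens B e N u v x) = tens B e N u v (h x) + (2 * N - m - n : F) • tens B e N u v x := by
  rw [tens_apply, tens_apply, map_sum, Finset.smul_sum, ← Finset.sum_add_distrib]
  refine Finset.sum_congr rfl fun i hi => ?_
  have hi' : i ≤ N := by have := Finset.mem_range.1 hi; omega
  have h1 : B u ((e ^ i) (h x)) = (m - 2 * i : F) * B u ((e ^ i) x) := by
    have h2 := s.skew_h u ((e ^ i) x)
    rw [s.h_pow, hu.2, map_smul, LinearMap.smul_apply, map_add, map_smul, smul_eq_mul,
      smul_eq_mul] at h2
    linear_combination h2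
  rw [map_smul, s.h_pow, hv.2, map_smul, h1, Nat.cast_sub hi']
  module

/-- The `B`-adjoint of `T_N(u, v)` is `ε (-1) ^ N T_N(v, u)`. -/
lemma tens_adj (s : FormSl2 B ε e h f) (N : ℕ) (u v x y : V) :
    B (tens B e N u v x) y = (ε * (-1) ^ N) * B x (tens B e N v u y) := by
  rw [tens_apply, tens_apply, ← Finset.sum_range_reflect, map_sum, map_sum, LinearMap.sum_apply,
    Finset.mul_sum]
  refine Finset.sum_congr rfl fun i hi => ?_
  have hi' : i ≤ N := by have := Finset.mem_range.1 hi; omega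
  rw [show N + 1 - 1 - i = N - i by omega, show N - (N - i) = i by omega, map_smul, map_smul,
    LinearMap.smul_apply, smul_eq_mul, smul_eq_mul, s.skew_pow, s.sym x, s.skew_pow]
  have h1 : ((-1 : F)) ^ N = (-1) ^ (N - i) * (-1) ^ i := by rw [← pow_add]; congr 1; omega
  have h2 : ((-1 : F)) ^ (N - i) * (-1) ^ (N - i) = 1 := by rw [← mul_pow]; simp
  rw [h1]
  linear_combination (-(-1) ^ i * B v ((e ^ i) y) * B u ((e ^ (N - i)) x)) * (ε * ε) * h2
    - (-1) ^ i * B v ((e ^ i) y) * B u ((e ^ (N - i)) x) * s.eps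

/-- The identity of `V` is the sum of the `T_m(u_i, w_i)` over dual bases of the spaces `W_m`, all
of which vanish for `m ≥ K`. -/
lemma exists_unity (s : FormSl2 B ε e h f) :
    ∃ K, ∃ u w : ∀ m, Fin (finrank F (lowest h f m)) → V,
      (∀ m i, u m i ∈ lowest h f m) ∧ (∀ m i, w m i ∈ lowest h f m) ∧
      (∀ m i, B (u m i) ((e ^ m) (w m i)) = 1) ∧
      (∀ m, ∀ x ∈ lowest h f m, ∑ i, B (u m i) ((e ^ m) x) • w m i = x) ∧
      (∀ m, K ≤ m → ∀ x ∈ lowest h f m, x = 0) ∧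
      ∀ x, ∑ m ∈ Finset.range K, ∑ i, tens B e m (u m i) (w m i) x = x := by
  obtain ⟨K, hK⟩ := s.nil
  choose u w hu hw h1 h2 using s.exists_dual
  have hz : ∀ m, K ≤ m → ∀ x ∈ lowest h f m, x = 0 := fun m hm x hx => s.lowest_eq_zero hx hK hm
  refine ⟨K, u, w, hu, hw, h1, h2, hz, fun x => ?_⟩
  have hx : x ∈ Submodule.span F {z : V | ∃ m i, ∃ w ∈ lowest h f m, z = (e ^ i) w} := by
    rw [s.span_pow_lowest]; trivial
  induction hx using Submodule.span_induction with
  | mem z hz' =>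
    obtain ⟨n, k, y, hy, rfl⟩ := hz'
    have h3 : ∀ m i, tens B e m (u m i) (w m i) ((e ^ k) y) =
        (e ^ k) (B (u m i) ((e ^ m) y) • w m i) := by
      intro m i
      rw [s.tens_comm_pow (hu m i) le_rfl (s.pow_lowest (hw m i) (by omega)),
        s.tens_lowest (hu m i) hy le_rfl, Nat.sub_self, pow_zero, Module.End.one_apply]
    simp only [h3]
    rw [Finset.sum_eq_single n]
    · rw [← map_sum, h2 n y hy]
    · intro m _ hm
      refine Finset.sum_eq_zero fun i _ => ?_
      have : B (u m i) ((e ^ m) y) = 0 := by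
        by_contra hne
        exact hm (s.orth (hu m i) hy hne).1.symm
      rw [this, zero_smul, map_zero]
    · intro hn
      rw [hz n (by simpa using hn) y hy]
      simp
  | zero => simp
  | add a b _ _ ha hb => simp only [map_add, Finset.sum_add_distrib, ha, hb]
  | smul c a _ ha => simp only [map_smul, ← Finset.smul_sum, ha]

/-- `T_N(u, v)` is linear in `v`. -/
lemma exists_tensL (B : LinearMap.BilinForm F V) (e : End F V) (N : ℕ) (u : V) :
    ∃ φ : V →ₗ[F] End F V, ∀ v, φ v = tens B e N u v := by
  refine ⟨⟨⟨fun v => tens B e N u v, fun a b => ?_⟩, fun c a => ?_⟩, fun v => rfl⟩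
  · ext x; simp [tens_apply, Finset.sum_add_distrib]
  · ext x; simp only [tens_apply, map_smul, Finset.smul_sum, RingHom.id_apply,
      LinearMap.smul_apply]
    exact Finset.sum_congr rfl fun i _ => smul_comm _ _ _

/-- The centraliser of `e` in `End V` is spanned by the operators `T_N(u, v)`. The condition on `L`
says that for `x` of `ad h`-weight `L`, only operators of weight `L` are needed. -/
lemma mem_span_tens (s : FormSl2 B ε e h f) {x : End F V} (hx : ∀ v, x (e v) = e (x v)) :
    x ∈ Submodule.span F {z : End F V | ∃ m n N, ∃ u ∈ lowest h f m, ∃ v ∈ lowest h f n,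
      m ≤ N ∧ n ≤ N ∧ (∀ L : ℕ, (∀ v, h (x v) = x (h v) + (L : F) • x v) → 2 * N = m + n + L) ∧
      z = tens B e N u v} := by
  have hxk : ∀ k v, x ((e ^ k) v) = (e ^ k) (x v) := by
    intro k
    induction k with
    | zero => simp
    | succ k ih => intro v; rw [pow_succ, Module.End.mul_apply, ih, hx, Module.End.mul_apply]
  obtain ⟨K, u, w, hu, hw, -, -, -, hid⟩ := s.exists_unity
  -- Composing `x` with the identity moves `x` onto the second argument of each `T_m(u_i, w_i)`.
  have h1 : x = ∑ m ∈ Finset.range K, ∑ i, tens B e m (u m i) (x (w m i)) := by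
    ext v
    conv_lhs => rw [← hid v]
    simp only [map_sum, LinearMap.sum_apply, tens_apply, map_smul, hxk]
  rw [h1]
  refine Submodule.sum_mem _ fun m _ => Submodule.sum_mem _ fun i _ => ?_
  rw [← h1]
  obtain ⟨φ, hφ⟩ := exists_tensL B e m (u m i)
  rw [← hφ, ← hid (x (w m i))]
  simp only [map_sum, tens_apply, map_smul]
  refine Submodule.sum_mem _ fun n _ => Submodule.sum_mem _ fun j _ =>
    Submodule.sum_mem _ fun k hk => ?_
  have hk' := Finset.mem_range.1 hk
  by_cases hne : B (u n j) ((e ^ k) (x (w m i))) = 0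
  · rw [hne, zero_smul]; exact Submodule.zero_mem _
  have hkm : k ≤ m := by
    by_contra! hlt
    exact hne (by rw [← hxk, s.pow_lowest (hw m i) hlt, map_zero, map_zero])
  refine Submodule.smul_mem _ _ (Submodule.subset_span ⟨m, n, m + (n - k), u m i, hu m i, w n j,
    hw n j, by omega, by omega, fun L hL => ?_, ?_⟩)
  · have h2 := s.weight (hu n j) (x := (e ^ k) (x (w m i))) (c := (2 * k + L - m : F))
      (by rw [s.h_pow, hL, (hw m i).2]; simp only [map_add, map_smul]; module) hne
    have h3 : ((2 * k + L : ℕ) : F) = ((n + m : ℕ) : F) := by push_cast; linear_combination h2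
    rw [Nat.cast_inj] at h3
    omega
  · rw [hφ, s.tens_shift (hu m i) le_rfl]

/-! ### Reachability forces all smaller Jordan blocks -/

/-- If `e` is a sum of commutators of elements of its centraliser, then `W_p ≠ 0` implies `W_k ≠ 0`
for all `k < p`. -/
lemma lowest_ne_zero (s : FormSl2 B ε e h f)
    (hr : e ∈ Submodule.span F {z : End F V | ∃ a b : End F V, (∀ v, a (e v) = e (a v)) ∧
      (∀ v, b (e v) = e (b v)) ∧ z = ⁅a, b⁆}) {k p : ℕ} (hkp : k < p)
    (hp : ∃ x ∈ lowest h f p, x ≠ 0) : ∃ x ∈ lowest h f k, x ≠ 0 := by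
  by_contra! hk
  obtain ⟨K, u, w, hu, hw, h1, h2, hz, -⟩ := s.exists_unity
  -- A partial trace of the coefficient of `e`, over the blocks of size larger than `k + 1`.
  let τ : End F V →ₗ[F] F := ∑ m ∈ Finset.Ioo k K, ∑ i,
    (B (u m i)).comp ((e ^ (m - 1)).comp (LinearMap.applyₗ (w m i)))
  have hτ : ∀ x, τ x = ∑ m ∈ Finset.Ioo k K, ∑ i, B (u m i) ((e ^ (m - 1)) (x (w m i))) := by
    intro x; simp [τ, LinearMap.sum_apply]
  have hτt : ∀ {q r N : ℕ} {a b : V}, a ∈ lowest h f q → b ∈ lowest h f r → q ≤ N → r ≤ N →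
      τ (tens B e N a b) = if k < q ∧ r = q ∧ N = q + 1 then B a ((e ^ q) b) else 0 := by
    intro q r N a b ha hb hq hr
    have h3 : ∀ m i, B (u m i) ((e ^ (m - 1)) (tens B e N a b (w m i))) =
        B a ((e ^ q) (w m i)) * B (u m i) ((e ^ (m - 1 + (N - q))) b) := by
      intro m i
      rw [s.tens_lowest ha (hw m i) hq, map_smul, map_smul, smul_eq_mul, pow_add,
        Module.End.mul_apply]
    rw [hτ]
    simp only [h3]
    split_ifs with hc
    · obtain ⟨hc1, rfl, rfl⟩ := hc
      rw [Finset.sum_eq_single r]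
      · conv_rhs => rw [← h2 r b hb]
        rw [map_sum, map_sum]
        refine Finset.sum_congr rfl fun i _ => ?_
        rw [map_smul, map_smul, smul_eq_mul, show r - 1 + (r + 1 - r) = r by omega, mul_comm]
      · intro m _ hm
        refine Finset.sum_eq_zero fun i _ => ?_
        have : B a ((e ^ r) (w m i)) = 0 := by
          by_contra hne
          exact hm (s.orth ha (hw m i) hne).1
        rw [this, zero_mul]
      · intro hm
        rw [hz r (by rw [Finset.mem_Ioo] at hm; omega) a ha]
        simp
    · refine Finset.sum_eq_zero fun m hm => Finset.sum_eq_zero fun i _ => ?_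
      rw [Finset.mem_Ioo] at hm
      by_contra hne
      obtain ⟨hn1, hn2⟩ := mul_ne_zero_iff.1 hne
      have h4 := s.orth ha (hw m i) hn1
      have h5 := s.orth (hu m i) hb hn2
      omega
  have hττ : ∀ {q r N q' r' N' : ℕ} {a b a' b' : V}, a ∈ lowest h f q → b ∈ lowest h f r →
      q ≤ N → r ≤ N → a' ∈ lowest h f q' → b' ∈ lowest h f r' → q' ≤ N' → r' ≤ N' →
      τ ⁅tens B e N a b, tens B e N' a' b'⁆ = 0 := by
    intro q r N q' r' N' a b a' b' ha hb hq hr ha' hb' hq' hr'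
    rw [Ring.lie_def, s.tens_mul ha hb ha' hb' hq hr hq', s.tens_mul ha' hb' ha hb hq' hr' hq,
      map_sub, map_smul, map_smul, smul_eq_mul, smul_eq_mul]
    by_cases h3 : q = k
    · subst h3; rw [hk a ha]; simp [tens]
    by_cases h4 : q' = k
    · subst h4; rw [hk a' ha']; simp [tens]
    by_cases h5 : r' = q
    swap
    · have h6 : B a ((e ^ q) b') = 0 := by
        by_contra hne; exact h5 (s.orth ha hb' hne).1
      rw [h6, zero_mul, zero_sub, neg_eq_zero]
      by_cases h7 : r = q'
      · rw [hτt ha hb' (by omega) (by omega), if_neg (by omega), mul_zero]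
      · have h8 : B a' ((e ^ q') b) = 0 := by
          by_contra hne; exact h7 (s.orth ha' hb hne).1
        rw [h8, zero_mul]
    by_cases h6 : r = q'
    swap
    · have h7 : B a' ((e ^ q') b) = 0 := by
        by_contra hne; exact h6 (s.orth ha' hb hne).1
      rw [h7, zero_mul, hτt ha' hb (by omega) (by omega), if_neg (by omega)]
      simp
    subst h5 h6
    -- Both terms of the commutator need `N + N' = r + r' + 1`. As `N, N' ≥ r, r'`, this forces
    -- `|r - r'| ≤ 1`, and neither is `k`, so they lie on the same side of `k`.
    rw [hτt ha' hb (by omega) (by omega), hτt ha hb' (by omega) (by omega)]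
    by_cases h7 : k < r ∧ N + N' = r + r' + 1
    · rw [if_pos (by omega), if_pos (by omega)]; ring
    · rw [if_neg (by omega), if_neg (by omega)]; simp
  have hsp : ∀ {a : End F V}, (∀ v, a (e v) = e (a v)) → a ∈ Submodule.span F {z : End F V |
      ∃ m n N, ∃ u ∈ lowest h f m, ∃ v ∈ lowest h f n, m ≤ N ∧ n ≤ N ∧ z = tens B e N u v} := by
    intro a ha
    refine Submodule.span_mono ?_ (s.mem_span_tens ha)
    rintro z ⟨m, n, N, y, hy, y', hy', hm, hn, -, rfl⟩
    exact ⟨m, n, N, y, hy, y', hy', hm, hn, rfl⟩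
  have hτe : ∀ x ∈ Submodule.span F {z : End F V | ∃ a b : End F V, (∀ v, a (e v) = e (a v)) ∧
      (∀ v, b (e v) = e (b v)) ∧ z = ⁅a, b⁆}, τ x = 0 := by
    intro x hx
    induction hx using Submodule.span_induction with
    | mem z hz' =>
      obtain ⟨a, b, ha, hb, rfl⟩ := hz'
      have ha' := hsp ha
      clear ha
      induction ha' using Submodule.span_induction with
      | mem a ha' =>
        obtain ⟨q, r, N, y, hy, y', hy', hq, hr, rfl⟩ := ha'
        have hb' := hsp hb
        clear hb
        induction hb' using Submodule.span_induction with
        | mem b hb' =>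
          obtain ⟨q', r', N', z, hz, z', hz', hq', hr', rfl⟩ := hb'
          exact hττ hy hy' hq hr hz hz' hq' hr'
        | zero => simp [Ring.lie_def]
        | add c d _ _ hc hd =>
          rw [Ring.lie_def] at *
          rw [mul_add, add_mul, add_sub_add_comm, map_add, hc, hd, add_zero]
        | smul t c _ hc =>
          rw [Ring.lie_def] at *
          rw [mul_smul_comm, smul_mul_assoc, ← smul_sub, map_smul, hc, smul_zero]
      | zero => simp [Ring.lie_def]
      | add c d _ _ hc hd =>
        rw [Ring.lie_def] at *
        rw [mul_add, add_mul, add_sub_add_comm, map_add, hc, hd, add_zero]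
      | smul t c _ hc =>
        rw [Ring.lie_def] at *
        rw [mul_smul_comm, smul_mul_assoc, ← smul_sub, map_smul, hc, smul_zero]
    | zero => simp
    | add c d _ _ hc hd => rw [map_add, hc, hd, add_zero]
    | smul t c _ hc => rw [map_smul, hc, smul_zero]
  have h3 : ∀ m ∈ Finset.Ioo k K, ∑ i, B (u m i) ((e ^ (m - 1)) (e (w m i))) =
      (finrank F (lowest h f m) : F) := by
    intro m hm
    rw [Finset.mem_Ioo] at hm
    have h4 : ∀ i, B (u m i) ((e ^ (m - 1)) (e (w m i))) = 1 := by
      intro i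
      rw [← Module.End.mul_apply, ← pow_succ, Nat.sub_add_cancel (by omega), h1]
    simp [h4]
  have hτe := hτe e hr
  rw [hτ, Finset.sum_congr rfl h3, ← Nat.cast_sum, Nat.cast_eq_zero, Finset.sum_eq_zero_iff] at hτe
  obtain ⟨x, hx, hx0⟩ := hp
  have hpK : p < K := by
    by_contra! hle
    exact hx0 (hz p hle x hx)
  have h5 := hτe p (Finset.mem_Ioo.2 ⟨hkp, hpK⟩)
  rw [Submodule.finrank_eq_zero] at h5
  rw [h5] at hx
  exact hx0 (by simpa using hx)

/-! ### Brackets of the operators `P_N(u, v)` -/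

lemma exists_pair (s : FormSl2 B ε e h f) {m : ℕ} {u : V} (hu : u ∈ lowest h f m) (h0 : u ≠ 0) :
    ∃ w ∈ lowest h f m, B w ((e ^ m) u) ≠ 0 := by
  by_contra! hc
  exact h0 (s.eq_zero_of_pair hu fun w hw => by rw [s.pair_comm hw hu, hc w hw, mul_zero])

lemma sign_mul (s : FormSl2 B ε e h f) {K M p R : ℕ} (hR : R + p = K + M) :
    (ε * (-1) ^ K) * (ε * (-1) ^ M) * (ε * (-1) ^ p) = ε * (-1) ^ R := by
  have h1 : ((-1 : F)) ^ R * (-1) ^ p = (-1) ^ K * (-1) ^ M := by rw [← pow_add, ← pow_add, hR]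
  have h2 : ((-1 : F)) ^ p * (-1) ^ p = 1 := by rw [← mul_pow]; simp
  linear_combination (-1) ^ K * (-1) ^ M * (-1) ^ p * ε * s.eps - (-1) ^ p * ε * h1
    + ε * (-1) ^ R * h2

/-- The bracket through `W_p` with `p ≠ m, n`: of the four pairings between `a, v` and `u, b`, only
`(a, b)` and `(u, v)` can be nonzero. -/
lemma lie_skewTens (s : FormSl2 B ε e h f) {p n m K M : ℕ} {a v u b : V}
    (ha : a ∈ lowest h f p) (hv : v ∈ lowest h f n) (hu : u ∈ lowest h f m)
    (hb : b ∈ lowest h f p) (hpK : p ≤ K) (hnK : n ≤ K) (hmM : m ≤ M) (hpM : p ≤ M)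
    (hpn : p ≠ n) (hpm : p ≠ m) :
    ⁅skewTens B ε e K a v, skewTens B ε e M u b⁆ = B a ((e ^ p) b) • skewTens B ε e (K + M - p) u v -
      B u ((e ^ m) v) • skewTens B ε e (K + M - m) a b := by
  have z1 : B a ((e ^ p) u) = 0 := by by_contra hne; exact hpm (s.orth ha hu hne).1.symm
  have z2 : B v ((e ^ n) b) = 0 := by by_contra hne; exact hpn (s.orth hv hb hne).1
  have z3 : B u ((e ^ m) a) = 0 := by by_contra hne; exact hpm (s.orth hu ha hne).1
  have z4 : B b ((e ^ p) v) = 0 := by by_contra hne; exact hpn (s.orth hb hv hne).1.symm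
  have c1 := s.pair_comm ha hb
  have c2 := s.pair_comm hu hv
  have r1 := s.sign_mul (K := K) (M := M) (p := p) (R := K + M - p) (by omega)
  rw [Ring.lie_def]
  simp only [skewTens, sub_mul, mul_sub, smul_mul_assoc, mul_smul_comm,
    s.tens_mul ha hv hu hb hpK hnK hmM, s.tens_mul ha hv hb hu hpK hnK hpM,
    s.tens_mul hv ha hu hb hnK hpK hmM, s.tens_mul hv ha hb hu hnK hpK hpM,
    s.tens_mul hu hb ha hv hmM hpM hpK, s.tens_mul hu hb hv ha hmM hpM hnK,
    s.tens_mul hb hu ha hv hpM hmM hpK, s.tens_mul hb hu hv ha hpM hmM hnK,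
    z1, z2, z3, z4, c1, c2, Nat.add_comm M K, zero_smul, smul_zero]
  by_cases hnm : n = m
  · subst hnm
    have r2 := s.sign_mul (K := K) (M := M) (p := n) (R := K + M - n) (by omega)
    rw [← r1, ← r2]
    module
  · have z5 : B u ((e ^ m) v) = 0 := by by_contra hne; exact hnm (s.orth hu hv hne).1
    rw [← r1, z5]
    module

/-- The bracket with `P_M(u, u)`. The sign condition `hM` gives `P_M(u, u) = 2 T_M(u, u)`; for the
opposite sign `P_M(u, u) = 0`. -/
lemma lie_skewTens_self (s : FormSl2 B ε e h f) {p n K M : ℕ} {a v u : V}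
    (ha : a ∈ lowest h f p) (hv : v ∈ lowest h f n) (hu : u ∈ lowest h f p)
    (hpK : p ≤ K) (hnK : n ≤ K) (hpM : p ≤ M) (hpn : p ≠ n) (hM : ε * (-1) ^ M = -1) :
    ⁅skewTens B ε e K a v, skewTens B ε e M u u⁆ =
      (2 * B a ((e ^ p) u)) • skewTens B ε e (K + M - p) u v := by
  have z2 : B v ((e ^ n) u) = 0 := by by_contra hne; exact hpn (s.orth hv hu hne).1
  have z4 : B u ((e ^ p) v) = 0 := by by_contra hne; exact hpn (s.orth hu hv hne).1.symm
  have c1 := s.pair_comm ha hu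
  have r1 := s.sign_mul (K := K) (M := M) (p := p) (R := K + M - p) (by omega)
  rw [hM] at r1
  rw [Ring.lie_def]
  simp only [skewTens, sub_mul, mul_sub, smul_mul_assoc, mul_smul_comm, hM,
    s.tens_mul ha hv hu hu hpK hnK hpM, s.tens_mul hv ha hu hu hnK hpK hpM,
    s.tens_mul hu hu ha hv hpM hpM hpK, s.tens_mul hu hu hv ha hpM hpM hnK,
    z2, z4, c1, Nat.add_comm M K, zero_smul, smul_zero]
  rw [← r1]
  module

lemma skewTens_swap (s : FormSl2 B ε e h f) (N : ℕ) (u v : V) :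
    skewTens B ε e N u v = (-(ε * (-1) ^ N)) • skewTens B ε e N v u := by
  have h2 : (ε * (-1) ^ N) * (ε * (-1) ^ N) = 1 := by
    have : ((-1 : F)) ^ N * (-1) ^ N = 1 := by rw [← mul_pow]; simp
    linear_combination ε * ε * this + s.eps
  rw [skewTens, skewTens, smul_sub, smul_smul, neg_mul, h2]
  module

/-- Under the no-gap hypothesis `hW`, a subspace containing all brackets of `P`'s of weights `1` and
`l` contains all `P`'s of weight `l + 1`. -/
lemma skewTens_mem (s : FormSl2 B ε e h f)
    (hW : ∀ k p, k < p → (∃ x ∈ lowest h f p, x ≠ 0) → ∃ x ∈ lowest h f k, x ≠ 0)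
    (l : ℕ) (S : Submodule F (End F V))
    (hS : ∀ {p n m q K M : ℕ} {a v u b : V}, a ∈ lowest h f p → v ∈ lowest h f n →
      u ∈ lowest h f m → b ∈ lowest h f q → p ≤ K → n ≤ K → m ≤ M → q ≤ M →
      2 * K = p + n + 1 → 2 * M = m + q + l → ⁅skewTens B ε e K a v, skewTens B ε e M u b⁆ ∈ S)
    {m n N : ℕ} {u v : V} (hu : u ∈ lowest h f m) (hv : v ∈ lowest h f n) (hm : m ≤ N)
    (hn : n ≤ N) (hN : 2 * N = m + n + (l + 1)) : skewTens B ε e N u v ∈ S := by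
  -- Blocks of different sizes: no error term.
  have off : ∀ {m n N : ℕ} {u v : V}, u ∈ lowest h f m → v ∈ lowest h f n → m < n → n ≤ N →
      2 * N = m + n + (l + 1) → skewTens B ε e N u v ∈ S := by
    intro m n N u v hu hv hmn hn hN
    by_cases hu0 : u = 0
    · subst hu0; simp [skewTens, tens]
    by_cases hv0 : v = 0
    · subst hv0; simp [skewTens, tens]
    rcases Nat.lt_or_ge (m + 1) n with hlt | hge
    · obtain ⟨b, hb, hb0⟩ := hW (n - 1) n (by omega) ⟨v, hv, hv0⟩
      obtain ⟨a, ha, hab⟩ := s.exists_pair hb hb0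
      have h1 := hS (K := n) (M := N - 1) ha hv hu hb (by omega) le_rfl (by omega) (by omega)
        (by omega) (by omega)
      have z : B u ((e ^ m) v) = 0 := by by_contra hne; have := (s.orth hu hv hne).1; omega
      rw [s.lie_skewTens ha hv hu hb (by omega) le_rfl (by omega) (by omega) (by omega) (by omega), z,
        zero_smul, sub_zero, show n + (N - 1) - (n - 1) = N by omega] at h1
      exact (S.smul_mem_iff hab).1 h1
    · obtain rfl : n = m + 1 := by omega
      have h2 : (ε * (-1) ^ (N - 1)) * (ε * (-1) ^ (N - 1)) = 1 := by
        have : ((-1 : F)) ^ (N - 1) * (-1) ^ (N - 1) = 1 := by rw [← mul_pow]; simp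
        linear_combination ε * ε * this + s.eps
      -- Consecutive block sizes: the sign decides between `P_N(v, v)` and `P_{N-1}(u, u)`.
      rcases mul_self_eq_one_iff.1 h2 with h3 | h3
      · have h4 : ε * (-1) ^ N = -1 := by
          obtain ⟨j, rfl⟩ : ∃ j, N = j + 1 := ⟨N - 1, by omega⟩
          rw [Nat.add_sub_cancel] at h3
          rw [pow_succ]; linear_combination -h3
        obtain ⟨a, ha, hab⟩ := s.exists_pair hv hv0
        have h1 := hS (K := m + 1) (M := N) ha hu hv hv le_rfl (by omega) (by omega) (by omega)
          (by omega) (by omega)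
        rw [s.lie_skewTens_self ha hu hv le_rfl (by omega) (by omega) (by omega) h4,
          show m + 1 + N - (m + 1) = N by omega] at h1
        rw [s.skewTens_swap]
        exact S.smul_mem _ ((S.smul_mem_iff (mul_ne_zero two_ne_zero hab)).1 h1)
      · obtain ⟨a, ha, hab⟩ := s.exists_pair hu hu0
        have h1 := hS (K := m + 1) (M := N - 1) ha hv hu hu (by omega) le_rfl (by omega) (by omega)
          (by omega) (by omega)
        rw [s.lie_skewTens_self ha hv hu (by omega) le_rfl (by omega) (by omega) h3,
          show m + 1 + (N - 1) - m = N by omega] at h1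
        exact (S.smul_mem_iff (mul_ne_zero two_ne_zero hab)).1 h1
  -- Blocks of equal size, by induction on the size.
  have diag : ∀ (m : ℕ) {N : ℕ} {u v : V}, u ∈ lowest h f m → v ∈ lowest h f m → m ≤ N →
      2 * N = m + m + (l + 1) → skewTens B ε e N u v ∈ S := by
    intro m
    induction m with
    | zero =>
      intro N u v hu hv hm hN
      -- `e` kills `W_0`, and `2N = l + 1 > 0`, so `T_N` vanishes on `W_0`.
      have key : ∀ {u v : V}, u ∈ lowest h f 0 → v ∈ lowest h f 0 → tens B e N u v = 0 := by
        intro u v hu hv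
        ext x
        rw [tens_apply]
        refine Finset.sum_eq_zero fun i _ => ?_
        rcases Nat.eq_zero_or_pos i with rfl | hi
        · rw [s.pow_lowest hv (by omega), smul_zero]
        · rw [s.pow_right_eq_zero hu hi, zero_smul]
      simp [skewTens, key hu hv, key hv hu]
    | succ m ih =>
      intro N u v hu hv hm hN
      by_cases hv0 : v = 0
      · subst hv0; simp [skewTens, tens]
      obtain ⟨b, hb, hb0⟩ := hW m (m + 1) (by omega) ⟨v, hv, hv0⟩
      obtain ⟨a, ha, hab⟩ := s.exists_pair hb hb0
      have h1 := hS (K := m + 1) (M := N - 1) ha hv hu hb (by omega) le_rfl (by omega) (by omega)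
        (by omega) (by omega)
      rw [s.lie_skewTens ha hv hu hb (by omega) le_rfl (by omega) (by omega) (by omega) (by omega),
        show m + 1 + (N - 1) - m = N by omega,
        show m + 1 + (N - 1) - (m + 1) = N - 1 by omega] at h1
      have h2 := S.add_mem h1 (S.smul_mem (B u ((e ^ (m + 1)) v))
        (ih (N := N - 1) ha hb (by omega) (by omega)))
      rw [sub_add_cancel] at h2
      exact (S.smul_mem_iff hab).1 h2
  rcases lt_trichotomy m n with hlt | rfl | hgt
  · exact off hu hv hlt hn hN
  · exact diag m hu hv hm hN
  · rw [s.skewTens_swap]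
    exact S.smul_mem _ (off hv hu hgt hm (by omega))

lemma skewTens_adj (s : FormSl2 B ε e h f) (N : ℕ) (u v x y : V) :
    B (skewTens B ε e N u v x) y = - B x (skewTens B ε e N u v y) := by
  have h2 : (ε * (-1) ^ N) * (ε * (-1) ^ N) = 1 := by
    have : ((-1 : F)) ^ N * (-1) ^ N = 1 := by rw [← mul_pow]; simp
    linear_combination ε * ε * this + s.eps
  simp only [skewTens, LinearMap.sub_apply, LinearMap.smul_apply, map_sub, map_smul, smul_eq_mul,
    s.tens_adj]
  linear_combination (-B x (tens B e N u v y)) * h2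

/-- The space `g(L)_e` is spanned by the operators `P_N(u, v)` of weight `L`. Indeed `x` is a
combination of operators `T_N(u, v)`, and `2 x = x - x*` is the same combination of the
`P_N(u, v)`, where `x*` is the `B`-adjoint. -/
lemma mem_span_skewTens (s : FormSl2 B ε e h f) {x : End F V} {L : ℕ}
    (hg : ∀ v w, B (x v) w = - B v (x w)) (hx : ∀ v, x (e v) = e (x v))
    (hL : ∀ v, h (x v) = x (h v) + (L : F) • x v) :
    x ∈ Submodule.span F {z : End F V | ∃ m n N, ∃ u ∈ lowest h f m, ∃ v ∈ lowest h f n,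
      m ≤ N ∧ n ≤ N ∧ 2 * N = m + n + L ∧ z = skewTens B ε e N u v} := by
  set P := Submodule.span F {z : End F V | ∃ m n N, ∃ u ∈ lowest h f m, ∃ v ∈ lowest h f n,
      m ≤ N ∧ n ≤ N ∧ 2 * N = m + n + L ∧ z = skewTens B ε e N u v} with hP
  have key : ∀ y ∈ Submodule.span F {z : End F V | ∃ m n N, ∃ u ∈ lowest h f m,
      ∃ v ∈ lowest h f n, m ≤ N ∧ n ≤ N ∧ 2 * N = m + n + L ∧ z = tens B e N u v},
      ∃ y' : End F V, (∀ v w, B (y v) w = B v (y' w)) ∧ y - y' ∈ P := by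
    intro y hy
    induction hy using Submodule.span_induction with
    | mem z hz =>
      obtain ⟨m, n, N, u, hu, v, hv, hm, hn, hN, rfl⟩ := hz
      refine ⟨(ε * (-1) ^ N) • tens B e N v u, fun a b => ?_, Submodule.subset_span
        ⟨m, n, N, u, hu, v, hv, hm, hn, hN, rfl⟩⟩
      rw [s.tens_adj, LinearMap.smul_apply, map_smul, smul_eq_mul]
    | zero => exact ⟨0, by simp, by simp⟩
    | add a b _ _ ha hb =>
      obtain ⟨a', ha1, ha2⟩ := ha
      obtain ⟨b', hb1, hb2⟩ := hb
      refine ⟨a' + b', by simp [ha1, hb1], ?_⟩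
      rw [add_sub_add_comm]
      exact P.add_mem ha2 hb2
    | smul c a _ ha =>
      obtain ⟨a', ha1, ha2⟩ := ha
      refine ⟨c • a', by simp [ha1], ?_⟩
      rw [← smul_sub]
      exact P.smul_mem _ ha2
  obtain ⟨x', h1, h2⟩ := key x (by
    refine Submodule.span_mono ?_ (s.mem_span_tens hx)
    rintro z ⟨m, n, N, u, hu, v, hv, hm, hn, hN, rfl⟩
    exact ⟨m, n, N, u, hu, v, hv, hm, hn, hN L hL, rfl⟩)
  have h3 : x' = -x := by
    ext w
    rw [← sub_eq_zero]
    refine s.nondeg.2 _ fun v => ?_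
    rw [map_sub, ← h1, hg, LinearMap.neg_apply, map_neg, sub_self]
  rw [h3, sub_neg_eq_add, ← two_smul F] at h2
  exact (P.smul_mem_iff two_ne_zero).1 h2

end FormSl2
end

/-! ### The bracket identity -/

/-- For a reachable nilpotent `e` in `so(V)` or `sp(V)`,
`[g(1)_e, g(λ)_e] = g(λ+1)_e` for every integer `λ ≥ 0`. -/
theorem bracket_g1e_glame_eq_glamsucce_of_reachable
    (F : Type*) [Field F] [IsAlgClosed F] [CharZero F]
    (V : Type*) [AddCommGroup V] [Module F V] [FiniteDimensional F V]
    (B : LinearMap.BilinForm F V) (hB : B.Nondegenerate)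
    (ε : F) (hε : ε = 1 ∨ ε = -1)
    (hsym : ∀ v w : V, B v w = ε * B w v)
    (g : Set (Module.End F V))
    (hg : g = {x : Module.End F V | ∀ v w : V, B (x v) w = - B v (x w)})
    (e h f : Module.End F V) (he : e ∈ g) (hh : h ∈ g) (hf : f ∈ g)
    (hnil : IsNilpotent e)
    (t1 : ⁅h, e⁆ = (2 : F) • e) (t2 : ⁅h, f⁆ = (-2 : F) • f) (t3 : ⁅e, f⁆ = h)
    (ge : Set (Module.End F V)) (hge : ge = {y ∈ g | ⁅e, y⁆ = 0})
    (hreach : e ∈ Submodule.span F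
      {z : Module.End F V | ∃ a ∈ ge, ∃ b ∈ ge, z = ⁅a, b⁆})
    (glam : ℕ → Set (Module.End F V))
    (hglam : ∀ l : ℕ, glam l = {x ∈ g | ⁅h, x⁆ = (l : F) • x ∧ ⁅e, x⁆ = 0}) :
    ∀ lam : ℕ,
      (Submodule.span F
        {z : Module.End F V | ∃ a ∈ glam 1, ∃ b ∈ glam lam, z = ⁅a, b⁆} :
        Set (Module.End F V)) = glam (lam + 1) := by
  intro l
  have lie0 : ∀ {x : End F V}, ⁅e, x⁆ = 0 ↔ ∀ v, x (e v) = e (x v) := by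
    intro x
    rw [Ring.lie_def, sub_eq_zero, LinearMap.ext_iff]
    exact forall_congr' fun v => eq_comm
  have lieh : ∀ {x : End F V} {c : F}, ⁅h, x⁆ = c • x ↔ ∀ v, h (x v) = x (h v) + c • x v := by
    intro x c
    rw [Ring.lie_def, LinearMap.ext_iff]
    exact forall_congr' fun v => sub_eq_iff_eq_add'
  have mem_glam : ∀ {k : ℕ} {x : End F V}, x ∈ glam k ↔ (∀ v w, B (x v) w = - B v (x w)) ∧
      (∀ v, h (x v) = x (h v) + (k : F) • x v) ∧ ∀ v, x (e v) = e (x v) := by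
    intro k x
    rw [hglam, hg, Set.mem_ofPred_eq, Set.mem_ofPred_eq, lieh, lie0]
  rw [hg] at he hh
  have s : FormSl2 B ε e h f :=
    { nil := hnil
      he := lieh.1 t1
      hf := fun v => by rw [lieh.1 t2]; module
      ef := fun v => by
        have := LinearMap.congr_fun t3 v
        rw [Ring.lie_def, LinearMap.sub_apply, sub_eq_iff_eq_add'] at this
        exact this
      nondeg := hB
      eps := by rcases hε with rfl | rfl <;> norm_num
      sym := hsym
      skew_e := he
      skew_h := hh }
  have hr := Submodule.span_mono (R := F) (t := {z : End F V | ∃ a b : End F V,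
      (∀ v, a (e v) = e (a v)) ∧ (∀ v, b (e v) = e (b v)) ∧ z = ⁅a, b⁆}) (by
    rintro z ⟨a, ha, b, hb, rfl⟩
    rw [hge] at ha hb
    exact ⟨a, b, lie0.1 ha.2, lie0.1 hb.2, rfl⟩) hreach
  have skewTens_mem_glam : ∀ {k m n N : ℕ} {u v : V}, u ∈ lowest h f m → v ∈ lowest h f n → m ≤ N → n ≤ N →
      2 * N = m + n + k → skewTens B ε e N u v ∈ glam k := by
    intro k m n N u v hu hv hm hn hN
    have hc : (2 * N - m - n : F) = k := by
      have : ((2 * N : ℕ) : F) = ((m + n + k : ℕ) : F) := by rw [hN]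
      push_cast at this
      linear_combination this
    refine mem_glam.2 ⟨s.skewTens_adj N u v, fun x => ?_, fun x => ?_⟩
    · have h1 := s.tens_weight (N := N) hu hv x
      have h2 := s.tens_weight (N := N) hv hu x
      rw [hc] at h1
      rw [show (2 * N - n - m : F) = k by rw [← hc]; ring] at h2
      simp only [skewTens, LinearMap.sub_apply, LinearMap.smul_apply, map_sub, map_smul, h1, h2]
      module
    · simp only [skewTens, LinearMap.sub_apply, LinearMap.smul_apply, map_sub, map_smul,
        s.tens_comm hu hm (s.pow_lowest hv (Nat.lt_succ_of_le hn)),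
        s.tens_comm hv hn (s.pow_lowest hu (Nat.lt_succ_of_le hm))]
  apply Set.Subset.antisymm
  · intro x hx
    rw [SetLike.mem_coe] at hx
    induction hx using Submodule.span_induction with
    | mem z hz =>
      obtain ⟨a, ha, b, hb, rfl⟩ := hz
      obtain ⟨a1, a2, a3⟩ := mem_glam.1 ha
      obtain ⟨b1, b2, b3⟩ := mem_glam.1 hb
      rw [mem_glam]
      simp only [Ring.lie_def, LinearMap.sub_apply, Module.End.mul_apply, map_sub]
      refine ⟨fun v w => ?_, fun v => ?_, fun v => ?_⟩
      · rw [a1, b1, b1, a1]; ring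
      · rw [a2, b2, b2, a2]
        simp only [map_add, map_smul]
        push_cast
        module
      · rw [b3, a3, a3, b3]
    | zero => rw [mem_glam]; simp
    | add a b _ _ ha hb =>
      obtain ⟨a1, a2, a3⟩ := mem_glam.1 ha
      obtain ⟨b1, b2, b3⟩ := mem_glam.1 hb
      rw [mem_glam]
      simp only [LinearMap.add_apply, map_add, a1, b1, a2, b2, a3, b3]
      refine ⟨fun v w => by ring, fun v => by module, fun v => trivial⟩
    | smul c a _ ha =>
      obtain ⟨a1, a2, a3⟩ := mem_glam.1 ha
      rw [mem_glam]
      simp only [LinearMap.smul_apply, map_smul, a1, a2, a3, smul_eq_mul]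
      refine ⟨fun v w => by ring, fun v => by module, fun v => trivial⟩
  · intro x hx
    obtain ⟨x1, x2, x3⟩ := mem_glam.1 hx
    rw [SetLike.mem_coe]
    refine Submodule.span_le.2 ?_ (s.mem_span_skewTens x1 x3 x2)
    rintro z ⟨m, n, N, u, hu, v, hv, hm, hn, hN, rfl⟩
    refine s.skewTens_mem (fun k p hkp hp => s.lowest_ne_zero hr hkp hp) l _ ?_ hu hv hm hn hN
    intro p n m q K M a v u b ha hv hu hb h1 h2 h3 h4 h5 h6
    exact Submodule.subset_span ⟨_, skewTens_mem_glam ha hv h1 h2 h5, _, skewTens_mem_glam hu hb h3 h4 h6, rfl⟩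
end

section
/- Let F be an algebraically closed field of characteristic 0, V a finite-dimensional F-vector space, B a nondegenerate bilinear form on V with B(v,w) = ε·B(w,v) for all v, w (ε = ±1), and let e ∈ End(V) be nilpotent and B-skew-adjoint (B(e·v, w) = -B(v, e·w)). Then there exist a natural number k, vectors w_1, ..., w_k ∈ V, positive integers d_1, ..., d_k, and an involution i ↦ i' of {1, ..., k} such that: (1) the family of vectors e^j·w_i, for 1 ≤ i ≤ k and 0 ≤ j ≤ d_i - 1, is a basis of V; (2) e^{d_i}·w_i = 0 for all i; (3) d_{i'} = d_i for all i; (4) B(e^a·w_i, e^b·w_j) = 0 for all a, b ≥ 0 whenever j ≠ i'; and (5) i = i' if and only if (-1)^{d_i}·ε = -1. -/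
/-!
Call a finite family of vectors `w i` with sizes `d i` and an involution `σ` *adapted* if it has all
the required properties except spanning, together with `B (e ^ (d i - 1) (w i)) (w (σ i)) ≠ 0`.
The Gram matrix of the vectors `e ^ a (w i)`, `a < d i`, is then anti-triangular on each pair of
blocks `(i, σ i)`, with nonzero antidiagonal. So these vectors are linearly independent and their
span `W` meets its orthogonal complement trivially (`IsAdapted.coeff_eq_zero`), whence
`V = W ⊕ W^⊥`, where `W^⊥` is `e`-stable and nondegenerate.

If `W^⊥ ≠ 0`, let `d` be the nilpotency index of `e` on it. The form `(x, y) ↦ B (e ^ (d - 1) x) y`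
on `W^⊥` is nonzero, and it is symmetric or alternating according to whether `(-1) ^ d * ε` is `-1`
or `1`. In the symmetric case polarization gives `v` with `B (e ^ (d - 1) v) v ≠ 0`, a self-paired
block. In the alternating case take `v, w` with `B (e ^ (d - 1) v) w ≠ 0`; adding to `v` multiples
of `e ^ i w` with `i ≥ 1` makes the cyclic subspace of `v` isotropic (`exists_isotropic`), and the
same is then done for `w`, giving a pair of blocks. Hence an adapted family that does not
span can be enlarged (`IsAdapted.extend`), and finite dimensionality bounds the process.
-/

open Module

section AdaptedFamilies

variable {F V : Type*} [Field F] [AddCommGroup V] [Module F V]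

/-- A family of cyclic vectors `w i` with block sizes `d i` and pairing `σ` as in the theorem,
where spanning is replaced by the nondegeneracy of the pairing between the blocks `i` and `σ i`. -/
structure IsAdapted (B : LinearMap.BilinForm F V) (ε : F) (e : Module.End F V) {ι : Type}
    (w : ι → V) (d : ι → ℕ) (σ : ι → ι) : Prop where
  pos : ∀ i, 1 ≤ d i
  invol : ∀ i, σ (σ i) = i
  pow_zero : ∀ i, (e ^ d i) (w i) = 0
  size : ∀ i, d (σ i) = d i
  orth : ∀ i j, j ≠ σ i → ∀ a b : ℕ, B ((e ^ a) (w i)) ((e ^ b) (w j)) = 0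
  self_iff : ∀ i, σ i = i ↔ (-1 : F) ^ d i * ε = -1
  ne_zero : ∀ i, B ((e ^ (d i - 1)) (w i)) (w (σ i)) ≠ 0

variable {B : LinearMap.BilinForm F V} {ε : F} {e : Module.End F V}

/-! ### Powers of a skew-adjoint endomorphism -/

lemma skew_pow (hskew : ∀ v w : V, B (e v) w = - B v (e w)) (a : ℕ) (v w : V) :
    B v ((e ^ a) w) = (-1) ^ a * B ((e ^ a) v) w := by
  induction a generalizing v with
  | zero => simp
  | succ n ih =>
    have h := hskew v ((e ^ n) w)
    rw [pow_succ' e, Module.End.mul_apply, ← neg_eq_iff_eq_neg.mpr h, ih (e v),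
      ← Module.End.mul_apply, ← pow_succ, ← pow_succ' e]
    ring

lemma skew_pow_pow (hskew : ∀ v w : V, B (e v) w = - B v (e w)) (a b : ℕ) (v w : V) :
    B ((e ^ a) v) ((e ^ b) w) = (-1) ^ b * B ((e ^ (a + b)) v) w := by
  rw [skew_pow hskew, ← Module.End.mul_apply, ← pow_add, add_comm b a]

/-- The form `(x, y) ↦ B (e ^ a x) y` is symmetric up to the sign `(-1) ^ a * ε`. -/
lemma twisted_symm (hskew : ∀ v w : V, B (e v) w = - B v (e w))
    (hsym : ∀ v w : V, B v w = ε * B w v) (a : ℕ) (v w : V) :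
    B ((e ^ a) v) w = (-1) ^ a * ε * B ((e ^ a) w) v := by
  rw [hsym, skew_pow hskew]; ring

lemma pow_apply_eq_zero_of_le {m n : ℕ} {x : V} (h : (e ^ m) x = 0) (hmn : m ≤ n) :
    (e ^ n) x = 0 := by
  obtain ⟨k, rfl⟩ := Nat.exists_eq_add_of_le' hmn
  rw [pow_add, Module.End.mul_apply, h, map_zero]

/-! ### Independence and orthogonal sums of adapted families -/

/-- Anti-triangularity of the Gram matrix: a combination of the vectors `e ^ a (w i)` orthogonal
to all of them has zero coefficients. -/
lemma IsAdapted.coeff_eq_zero {ι : Type} [Fintype ι] {w : ι → V} {d : ι → ℕ} {σ : ι → ι}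
    (h : IsAdapted B ε e w d σ) (hskew : ∀ v w : V, B (e v) w = - B v (e w))
    (c : ((i : ι) × Fin (d i)) → F)
    (hc : ∀ j b, B (∑ p, c p • (e ^ (p.2 : ℕ)) (w p.1)) ((e ^ b) (w j)) = 0) (p) : c p = 0 := by
  have key : ∀ a : ℕ, ∀ i (ha : a < d i), c ⟨i, ⟨a, ha⟩⟩ = 0 := by
    intro a
    induction a using Nat.strong_induction_on with
    | _ a ih =>
      intro i ha
      -- Pairing with `e ^ (d i - 1 - a) (w (σ i))` kills all terms of higher degree.
      have h1 := hc (σ i) (d i - 1 - a)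
      rw [map_sum, LinearMap.sum_apply, Finset.sum_eq_single ⟨i, ⟨a, ha⟩⟩] at h1
      · simp only [map_smul, LinearMap.smul_apply, smul_eq_mul] at h1
        rw [skew_pow_pow hskew, show a + (d i - 1 - a) = d i - 1 by omega] at h1
        simpa [h.ne_zero i] using h1
      · rintro ⟨j, ⟨b, hb⟩⟩ - hne
        simp only [map_smul, LinearMap.smul_apply, smul_eq_mul]
        by_cases hj : j = i
        · subst hj
          rcases lt_trichotomy b a with hlt | heq | hgt
          · rw [ih b hlt, zero_mul]
          · subst heq; exact absurd rfl hne
          · rw [skew_pow_pow hskew, pow_apply_eq_zero_of_le (h.pow_zero j) (by omega)]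
            simp
        · rw [h.orth j (σ i), mul_zero]
          intro hs
          exact hj (by rw [← h.invol j, ← hs, h.invol])
      · simp
  exact key p.2 p.1 p.2.2

lemma IsAdapted.linearIndependent {ι : Type} [Fintype ι] {w : ι → V} {d : ι → ℕ} {σ : ι → ι}
    (h : IsAdapted B ε e w d σ) (hskew : ∀ v w : V, B (e v) w = - B v (e w)) :
    LinearIndependent F (fun p : (i : ι) × Fin (d i) => (e ^ (p.2 : ℕ)) (w p.1)) := by
  rw [Fintype.linearIndependent_iff]
  intro c hc
  exact h.coeff_eq_zero hskew c (fun j b => by rw [hc]; simp)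

/-- The orthogonal sum of two adapted families is adapted. -/
lemma IsAdapted.sum {ι κ : Type} {w : ι → V} {d : ι → ℕ} {σ : ι → ι}
    {w' : κ → V} {d' : κ → ℕ} {σ' : κ → κ}
    (h : IsAdapted B ε e w d σ) (h' : IsAdapted B ε e w' d' σ')
    (hsym : ∀ v w : V, B v w = ε * B w v)
    (ho : ∀ i j, ∀ a b : ℕ, B ((e ^ a) (w i)) ((e ^ b) (w' j)) = 0) :
    IsAdapted B ε e (Sum.elim w w') (Sum.elim d d') (Sum.map σ σ') where
  pos := by rintro (i | i); exacts [h.pos i, h'.pos i]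
  invol := by rintro (i | i); exacts [congrArg _ (h.invol i), congrArg _ (h'.invol i)]
  pow_zero := by rintro (i | i); exacts [h.pow_zero i, h'.pow_zero i]
  size := by rintro (i | i); exacts [h.size i, h'.size i]
  orth := by
    rintro (i | i) (j | j) hij a b
    · exact h.orth i j (fun hh => hij (congrArg _ hh)) a b
    · exact ho i j a b
    · rw [hsym]
      exact mul_eq_zero_of_right _ (ho j i b a)
    · exact h'.orth i j (fun hh => hij (congrArg _ hh)) a b
  self_iff := by
    rintro (i | i)
    · simpa using h.self_iff i
    · simpa using h'.self_iff i
  ne_zero := by rintro (i | i); exacts [h.ne_zero i, h'.ne_zero i]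

/-! ### Construction of a block or a pair of blocks -/

/-- When `B (e ^ (d - 1) ·) ·` is alternating on `U`, a vector `v` that pairs nontrivially with `w`
can be corrected by multiples of `e ^ i w`, `i ≥ 1`, to generate an isotropic cyclic subspace. -/
lemma exists_isotropic [CharZero F] (hskew : ∀ v w : V, B (e v) w = - B v (e w))
    (hsym : ∀ v w : V, B v w = ε * B w v)
    {U : Submodule F V} (hU : ∀ x ∈ U, e x ∈ U) {d : ℕ} (hd : 1 ≤ d)
    (hdU : ∀ x ∈ U, (e ^ d) x = 0) (hsign : (-1 : F) ^ (d - 1) * ε = -1)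
    {v w : V} (hv : v ∈ U) (hw : w ∈ U) (hvw : B ((e ^ (d - 1)) v) w ≠ 0) :
    ∃ v' ∈ U, B ((e ^ (d - 1)) v') w ≠ 0 ∧ ∀ a, B ((e ^ a) v') v' = 0 := by
  have hUp : ∀ (a : ℕ), ∀ x ∈ U, (e ^ a) x ∈ U := by
    intro a
    induction a with
    | zero => simp
    | succ n ih => intro x hx; rw [pow_succ', Module.End.mul_apply]; exact hU _ (ih x hx)
  have hz : ∀ n, d ≤ n → ∀ x ∈ U, (e ^ n) x = 0 :=
    fun n hn x hx => pow_apply_eq_zero_of_le (hdU x hx) hn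
  -- Descending induction: with `n` steps done, the pairings of degree at least `d - n` vanish.
  have main : ∀ n ≤ d, ∃ v' ∈ U, B ((e ^ (d - 1)) v') w ≠ 0 ∧
      ∀ a, d - n ≤ a → B ((e ^ a) v') v' = 0 := by
    intro n
    induction n with
    | zero =>
      intro _
      exact ⟨v, hv, hvw, fun a ha => by rw [hz a (by omega) v hv]; simp⟩
    | succ n ih =>
      intro hn
      obtain ⟨u, hu, huw, hua⟩ := ih (by omega)
      obtain ⟨m, hm⟩ : ∃ m, m = d - (n + 1) := ⟨_, rfl⟩
      have hmd : m + n + 1 = d := by omega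
      have hd1 : d - 1 = m + n := by omega
      rw [hd1] at hsign huw ⊢
      rcases neg_one_pow_eq_or F n with hpar | hpar
      ·
        -- For `n` even the form of degree `m` is alternating.
        refine ⟨u, hu, huw, fun a ha => ?_⟩
        rcases Nat.lt_or_ge a (d - n) with hlt | hge
        · have : a = m := by omega
          subst this
          have h1 := twisted_symm hskew hsym a u u
          rw [pow_add, hpar, mul_one] at hsign
          rw [hsign] at h1
          exact self_eq_neg.mp (by simpa using h1)
        · exact hua a hge
      · have hn1 : 1 ≤ n := by
          rcases Nat.eq_zero_or_pos n with h0 | h0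
          · subst h0
            norm_num at hpar
          · exact h0
        -- The cross terms in degree `m` are both equal to `-c * B (e ^ (d - 1) u) w`.
        let c : F := B ((e ^ m) u) u / (2 * B ((e ^ (m + n)) u) w)
        have exp : ∀ a, m ≤ a → B ((e ^ a) (u + c • (e ^ n) w)) (u + c • (e ^ n) w) =
            B ((e ^ a) u) u - 2 * c * B ((e ^ (a + n)) u) w := by
          intro a ha
          have e1 : B ((e ^ a) ((e ^ n) w)) ((e ^ n) w) = 0 := by
            rw [skew_pow hskew, ← Module.End.mul_apply, ← Module.End.mul_apply, ← pow_add,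
              ← pow_add, hz _ (by omega) w hw]
            simp
          have e2 : B ((e ^ a) u) ((e ^ n) w) = - B ((e ^ (a + n)) u) w := by
            rw [skew_pow_pow hskew, hpar]; ring
          have e3 : B ((e ^ a) ((e ^ n) w)) u = - B ((e ^ (a + n)) u) w := by
            rw [← Module.End.mul_apply, ← pow_add]
            rcases Nat.eq_or_lt_of_le ha with h | h
            · subst h
              rw [twisted_symm hskew hsym, hsign]; ring
            · rw [hz _ (by omega) w hw, hz _ (by omega) u hu]; simp
          simp only [map_add, map_smul, LinearMap.add_apply, LinearMap.smul_apply, smul_eq_mul,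
            e1, e2, e3]
          ring
        refine ⟨u + c • (e ^ n) w, U.add_mem hu (U.smul_mem _ (hUp n w hw)), ?_, fun a ha => ?_⟩
        · rw [map_add, map_smul, ← Module.End.mul_apply, ← pow_add, hz (m + n + n) (by omega) w hw]
          simpa using huw
        · rw [exp a (by omega)]
          rcases Nat.lt_or_ge a (d - n) with hlt | hge
          · have : a = m := by omega
            subst this
            simp only [c]
            field_simp
            ring
          · rw [hua a hge, hz (a + n) (by omega) u hu]
            simp
  obtain ⟨v', h1, h2, h3⟩ := main d le_rfl
  exact ⟨v', h1, h2, fun a => h3 a (by omega)⟩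

/-- A nonzero `e`-stable subspace on which `B` is nondegenerate contains an adapted family
consisting of one self-paired block or of two blocks paired with each other. -/
lemma exists_block [CharZero F] (hskew : ∀ v w : V, B (e v) w = - B v (e w))
    (hε : ε = 1 ∨ ε = -1) (hsym : ∀ v w : V, B v w = ε * B w v) (hnil : IsNilpotent e)
    {U : Submodule F V} (hU : ∀ x ∈ U, e x ∈ U)
    (hUB : ∀ x ∈ U, (∀ y ∈ U, B x y = 0) → x = 0) (hne : U ≠ ⊥) :
    ∃ (κ : Type) (_ : Fintype κ) (w : κ → V) (d : κ → ℕ) (σ : κ → κ),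
      IsAdapted B ε e w d σ ∧ (∀ i, w i ∈ U) ∧ Nonempty κ := by
  classical
  have hUp : ∀ (a : ℕ), ∀ x ∈ U, (e ^ a) x ∈ U := by
    intro a
    induction a with
    | zero => simp
    | succ n ih => intro x hx; rw [pow_succ', Module.End.mul_apply]; exact hU _ (ih x hx)
  have hex : ∃ n, ∀ x ∈ U, (e ^ n) x = 0 := by
    obtain ⟨n, hn⟩ := hnil
    exact ⟨n, fun x _ => by simp [hn]⟩
  obtain ⟨d, hdU, hmin⟩ : ∃ d, (∀ x ∈ U, (e ^ d) x = 0) ∧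
      ∀ m < d, ¬ ∀ x ∈ U, (e ^ m) x = 0 :=
    ⟨Nat.find hex, Nat.find_spec hex, fun m hm => Nat.find_min hex hm⟩
  have hd : 1 ≤ d := by
    rcases Nat.eq_zero_or_pos d with h0 | h0
    · subst h0
      exact absurd ((Submodule.eq_bot_iff U).mpr (by simpa using hdU)) hne
    · exact h0
  obtain ⟨v, hv, w, hw, hvw⟩ : ∃ v ∈ U, ∃ w ∈ U, B ((e ^ (d - 1)) v) w ≠ 0 := by
    by_contra! hcon
    exact hmin (d - 1) (by omega) fun x hx => hUB _ (hUp _ x hx) (hcon x hx)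
  have hpow : (-1 : F) ^ d * ε = - ((-1) ^ (d - 1) * ε) := by
    obtain ⟨n, rfl⟩ := Nat.exists_eq_add_of_le' hd
    rw [Nat.add_sub_cancel, pow_succ]; ring
  have hsign : (-1 : F) ^ (d - 1) * ε = 1 ∨ (-1 : F) ^ (d - 1) * ε = -1 := by
    rcases neg_one_pow_eq_or F (d - 1) with h | h <;> rcases hε with h' | h' <;>
      rw [h, h'] <;> norm_num
  rcases hsign with hs | hs
  · obtain ⟨u, hu, huu⟩ : ∃ u ∈ U, B ((e ^ (d - 1)) u) u ≠ 0 := by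
      by_contra! hcon
      -- Polarization.
      have h1 := hcon (v + w) (U.add_mem hv hw)
      have h2 := twisted_symm hskew hsym (d - 1) w v
      rw [hs, one_mul] at h2
      simp only [map_add, LinearMap.add_apply, hcon v hv, hcon w hw, h2] at h1
      apply hvw
      have : (2 : F) * B ((e ^ (d - 1)) v) w = 0 := by linear_combination h1
      simpa using this
    refine ⟨Unit, inferInstance, fun _ => u, fun _ => d, id, ?_, fun _ => hu, inferInstance⟩
    exact ⟨fun _ => hd, fun _ => rfl, fun _ => hdU u hu, fun _ => rfl,
      fun i j hij => absurd (Subsingleton.elim _ _) hij,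
      fun _ => by simp [hpow, hs], fun _ => huu⟩
  · obtain ⟨v', hv', hvw', hiso⟩ := exists_isotropic hskew hsym hU hd hdU hs hv hw hvw
    have hwv : B ((e ^ (d - 1)) w) v' ≠ 0 := by
      rw [twisted_symm hskew hsym, hs]
      simpa using hvw'
    obtain ⟨w', hw', hwv', hiso'⟩ := exists_isotropic hskew hsym hU hd hdU hs hw hv' hwv
    have hvw'' : B ((e ^ (d - 1)) v') w' ≠ 0 := by
      rw [twisted_symm hskew hsym, hs]
      simpa using hwv'
    refine ⟨Bool, inferInstance, fun i => cond i v' w', fun _ => d, not, ?_, ?_, inferInstance⟩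
    · refine ⟨fun _ => hd, Bool.not_not, ?_, fun _ => rfl, ?_, ?_, ?_⟩
      · rintro (_ | _)
        exacts [hdU w' hw', hdU v' hv']
      · rintro (_ | _) (_ | _) hij a b
        · simp [skew_pow_pow hskew, hiso']
        · simp at hij
        · simp at hij
        · simp [skew_pow_pow hskew, hiso]
      · intro i
        have h1 : (1 : F) ≠ -1 := fun h => one_ne_zero (self_eq_neg.mp h)
        rw [hpow, hs, neg_neg]
        simp [h1]
      · rintro (_ | _)
        exacts [hwv', hvw'']
    · rintro (_ | _)
      exacts [hw', hv']

/-! ### Enlarging an adapted family -/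

/-- An adapted family whose cyclic subspaces do not span can be enlarged inside the orthogonal
complement of their span. -/
lemma IsAdapted.extend [CharZero F] [FiniteDimensional F V]
    {ι : Type} [Fintype ι] {w : ι → V} {d : ι → ℕ} {σ : ι → ι}
    (h : IsAdapted B ε e w d σ) (hB : B.Nondegenerate)
    (hskew : ∀ v w : V, B (e v) w = - B v (e w))
    (hε : ε = 1 ∨ ε = -1) (hsym : ∀ v w : V, B v w = ε * B w v) (hnil : IsNilpotent e)
    (hspan : Submodule.span F
      (Set.range fun p : (i : ι) × Fin (d i) => (e ^ (p.2 : ℕ)) (w p.1)) ≠ ⊤) :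
    ∃ (κ : Type) (_ : Fintype κ) (w' : κ → V) (d' : κ → ℕ) (σ' : κ → κ),
      IsAdapted B ε e w' d' σ' ∧ ∑ i, d i < ∑ i, d' i := by
  set W := Submodule.span F
      (Set.range fun p : (i : ι) × Fin (d i) => (e ^ (p.2 : ℕ)) (w p.1)) with hW
  have hrefl : B.IsRefl := fun x y hxy => by rw [hsym, hxy, mul_zero]
  have hmem : ∀ j b, (e ^ b) (w j) ∈ W := by
    intro j b
    rcases Nat.lt_or_ge b (d j) with hb | hb
    · exact Submodule.subset_span ⟨⟨j, ⟨b, hb⟩⟩, rfl⟩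
    · rw [pow_apply_eq_zero_of_le (h.pow_zero j) hb]
      exact W.zero_mem
  have hdis : Disjoint W (B.orthogonal W) := by
    rw [Submodule.disjoint_def]
    intro x hx hx'
    obtain ⟨c, rfl⟩ := (Submodule.mem_span_range_iff_exists_fun F).mp hx
    have hc := h.coeff_eq_zero hskew c (fun j b => hrefl _ _ (hx' _ (hmem j b)))
    simp [hc]
  have hcompl := (LinearMap.BilinForm.isCompl_orthogonal_iff_disjoint hrefl).mpr hdis
  have hWe : ∀ x ∈ W, e x ∈ W := by
    intro x hx
    induction hx using Submodule.span_induction with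
    | mem x hx =>
      obtain ⟨p, rfl⟩ := hx
      have := hmem p.1 (p.2 + 1)
      rwa [pow_succ', Module.End.mul_apply] at this
    | zero => simp
    | add x y _ _ hx hy => rw [map_add]; exact W.add_mem hx hy
    | smul a x _ hx => rw [map_smul]; exact W.smul_mem _ hx
  have hUe : ∀ x ∈ B.orthogonal W, e x ∈ B.orthogonal W := by
    intro x hx n hn
    have h1 := hskew n x
    have h2 : B (e n) x = 0 := hx _ (hWe n hn)
    rw [h2] at h1
    exact neg_eq_zero.mp h1.symm
  have hUB : ∀ x ∈ B.orthogonal W, (∀ y ∈ B.orthogonal W, B x y = 0) → x = 0 := by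
    intro x hx hxy
    refine hB.1 x fun y => ?_
    obtain ⟨y₁, hy₁, y₂, hy₂, rfl⟩ := Submodule.mem_sup.mp
      (hcompl.sup_eq_top ▸ Submodule.mem_top : y ∈ W ⊔ B.orthogonal W)
    rw [map_add, hxy y₂ hy₂, hrefl _ _ (hx y₁ hy₁), add_zero]
  have hne : B.orthogonal W ≠ ⊥ := fun hbot => hspan (by
    have := hcompl.sup_eq_top
    rwa [hbot, sup_bot_eq] at this)
  obtain ⟨κ, _, w', d', σ', h', hU', ⟨i₀⟩⟩ := exists_block hskew hε hsym hnil hUe hUB hne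
  have hUp : ∀ (a : ℕ), ∀ x ∈ B.orthogonal W, (e ^ a) x ∈ B.orthogonal W := by
    intro a
    induction a with
    | zero => simp
    | succ n ih => intro x hx; rw [pow_succ', Module.End.mul_apply]; exact hUe _ (ih x hx)
  refine ⟨ι ⊕ κ, inferInstance, _, _, _,
    h.sum h' hsym fun i j a b => hUp b _ (hU' j) _ (hmem i a), ?_⟩
  simp only [Fintype.sum_sum_type, Sum.elim_inl, Sum.elim_inr]
  have h1 : d' i₀ ≤ ∑ i, d' i := Finset.single_le_sum (fun _ _ => Nat.zero_le _) (Finset.mem_univ _)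
  have h2 := h'.pos i₀
  omega

end AdaptedFamilies

/-- Adapted choice of cyclic vectors for a nilpotent `B`-skew-adjoint endomorphism:
the Jordan blocks can be paired by an involution `i ↦ i'` matching block sizes,
with `V[i] ⊥ V[j]` for `j ≠ i'`, and `i = i'` exactly when `(-1)^{d_i}·ε = -1`. -/
theorem adapted_cyclic_vectors_exist
    (F : Type*) [Field F] [IsAlgClosed F] [CharZero F]
    (V : Type*) [AddCommGroup V] [Module F V] [FiniteDimensional F V]
    (B : LinearMap.BilinForm F V) (hB : B.Nondegenerate)
    (ε : F) (hε : ε = 1 ∨ ε = -1)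
    (hsym : ∀ v w : V, B v w = ε * B w v)
    (e : Module.End F V) (hnil : IsNilpotent e)
    (hskew : ∀ v w : V, B (e v) w = - B v (e w)) :
    ∃ (k : ℕ) (w : Fin k → V) (d : Fin k → ℕ) (σ : Fin k → Fin k),
      (∀ i, 1 ≤ d i) ∧
      (∀ i, σ (σ i) = i) ∧
      (∃ bV : Basis ((i : Fin k) × Fin (d i)) F V,
        ∀ p : (i : Fin k) × Fin (d i), bV p = (e ^ (p.2 : ℕ)) (w p.1)) ∧
      (∀ i, (e ^ d i) (w i) = 0) ∧
      (∀ i, d (σ i) = d i) ∧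
      (∀ i j, j ≠ σ i → ∀ a b : ℕ, B ((e ^ a) (w i)) ((e ^ b) (w j)) = 0) ∧
      (∀ i, σ i = i ↔ (-1 : F) ^ d i * ε = -1) := by
  obtain ⟨ι, _, w, d, σ, h, hspan⟩ : ∃ (ι : Type) (_ : Fintype ι) (w : ι → V) (d : ι → ℕ)
      (σ : ι → ι), IsAdapted B ε e w d σ ∧ Submodule.span F
        (Set.range fun p : (i : ι) × Fin (d i) => (e ^ (p.2 : ℕ)) (w p.1)) = ⊤ := by
    by_contra! hcon
    have hbig : ∀ n : ℕ, ∃ (ι : Type) (_ : Fintype ι) (w : ι → V) (d : ι → ℕ) (σ : ι → ι),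
        IsAdapted B ε e w d σ ∧ n ≤ ∑ i, d i := by
      intro n
      induction n with
      | zero =>
        exact ⟨Empty, inferInstance, Empty.elim, Empty.elim, id,
          ⟨nofun, nofun, nofun, nofun, nofun, nofun, nofun⟩, Nat.zero_le _⟩
      | succ n ih =>
        obtain ⟨ι, _, w, d, σ, h, hn⟩ := ih
        obtain ⟨κ, i', w', d', σ', h', hlt⟩ :=
          h.extend hB hskew hε hsym hnil (hcon ι inferInstance w d σ h)
        exact ⟨κ, i', w', d', σ', h', by omega⟩
    obtain ⟨ι, _, w, d, σ, h, hn⟩ := hbig (finrank F V + 1)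
    have := (h.linearIndependent hskew).fintype_card_le_finrank
    simp only [Fintype.card_sigma, Fintype.card_fin] at this
    omega
  let φ := Fintype.equivFin ι
  let bV := Basis.mk (h.linearIndependent hskew) hspan.ge
  refine ⟨Fintype.card ι, w ∘ φ.symm, d ∘ φ.symm, φ ∘ σ ∘ φ.symm, fun i => h.pos _, fun i => ?_,
    ⟨bV.reindex (Equiv.sigmaCongrLeft' (β := fun i => Fin (d i)) φ), fun p => ?_⟩,
    fun i => h.pow_zero _, fun i => ?_, fun i j hij a b => ?_, fun i => ?_⟩
  · simp [h.invol]
  · obtain ⟨i, a⟩ := p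
    simp [bV, Basis.reindex_apply, Equiv.sigmaCongrLeft']
  · simp [h.size]
  · exact h.orth _ _ (fun hh => hij (by simp [← hh])) a b
  · rw [Function.comp_apply (f := d), ← h.self_iff]
    exact φ.eq_symm_apply.symm
end
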